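/- Let S be a quasi-hereditary algebra, Π ⊆ Λ⁺ a saturated subset, and S(Π) = S/Se_ΓS the corresponding quasi-hereditary quotient, where Γ = Λ⁺ \ Π. For every finite-dimensional S(Π)-module M, the ∇-filtration dimension of M as an S(Π)-module equals the ∇-filtration dimension of M as an S-module, and likewise for the Δ-filtration dimension. -/

import Mathlib

/-!
Common definitions for formalizing "On the global and ∇-filtration dimensions of
quasi-hereditary algebras" by Erdmann and Parker.

We work with a finite-dimensional algebra `S` over a field `k`; since `S` is
finite dimensional over `k`, the finite-dimensional `S`-modules are exactly the
finitely generated ones, so we express finite-dimensionality of a module `M` as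
`Module.Finite S M`.
-/

open CategoryTheory

namespace QHPaper

variable (S : Type) [Ring S]

/-- The subquotient `B ⧸ A` associated to two submodules `A B` of `M`. -/
abbrev subquot {M : ModuleCat.{0} S} (A B : Submodule S ↥M) : Type :=
  ↥B ⧸ (Submodule.comap B.subtype A)

/-- A filtration `⊥ = f 0 ≤ f 1 ≤ ⋯ ≤ f n = ⊤` of `M` whose `i`-th section
`f (i+1) / f i` is isomorphic to the prescribed module `D i`. -/
def HasFiltrationWithSections (M : ModuleCat.{0} S) (n : ℕ)
    (f : Fin (n + 1) → Submodule S ↥M) (D : Fin n → ModuleCat.{0} S) : Prop :=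
  Monotone f ∧ f 0 = ⊥ ∧ f (Fin.last n) = ⊤ ∧
    ∀ i : Fin n, Nonempty ((subquot S (f i.castSucc) (f i.succ)) ≃ₗ[S] ↥(D i))

/-- `L` occurs as a (simple) subquotient of `M`; for `L` simple this says that `L`
is a composition factor of `M`. -/
def IsCompFactor (L M : ModuleCat.{0} S) : Prop :=
  ∃ (A B : Submodule S ↥M), A ≤ B ∧ Nonempty ((subquot S A B) ≃ₗ[S] ↥L)

/-- `L` occurs with multiplicity `m` among the sections of a composition series of `M`. -/
def CompFactorMult (L M : ModuleCat.{0} S) (m : ℕ) : Prop :=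
  ∃ (n : ℕ) (f : Fin (n + 1) → Submodule S ↥M),
    Monotone f ∧ f 0 = ⊥ ∧ f (Fin.last n) = ⊤ ∧
    (∀ i : Fin n, IsSimpleModule S (subquot S (f i.castSucc) (f i.succ))) ∧
    Nat.card {i : Fin n // Nonempty ((subquot S (f i.castSucc) (f i.succ)) ≃ₗ[S] ↥L)} = m

/-- `P` is a projective cover of `M`: `P` is projective and there is a surjection
`P → M` whose kernel is superfluous in `P`. -/
def IsProjCover (P M : ModuleCat.{0} S) : Prop :=
  Module.Projective S ↥P ∧ ∃ π : ↥P →ₗ[S] ↥M, Function.Surjective π ∧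
    ∀ N : Submodule S ↥P, N ⊔ LinearMap.ker π = ⊤ → N = ⊤

/-- `I` is an injective hull of `M`: `I` is injective and there is an injection
`M → I` with essential image. -/
def IsInjHull (I M : ModuleCat.{0} S) : Prop :=
  Module.Injective S ↥I ∧ ∃ ι : ↥M →ₗ[S] ↥I, Function.Injective ι ∧
    ∀ N : Submodule S ↥I, N ⊓ LinearMap.range ι = ⊥ → N = ⊥

/-- The data of a quasi-hereditary algebra structure on `S` with weight poset `Λ`:
a full set `L` of pairwise non-isomorphic simple modules, their projective covers `P`
and injective hulls `I`, the standard modules `std` (largest quotient of `P lam` with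
all composition factors `L mu`, `mu ≤ lam`), the costandard modules `costd`
(largest submodule of `I lam` with all composition factors `L mu`, `mu ≤ lam`),
such that `L lam` occurs exactly once in `std lam` and `P lam` is filtered by
standard modules `std mu` with `mu ≥ lam`, with `std lam` occurring exactly once. -/
structure QHData (Λ : Type) [Fintype Λ] [PartialOrder Λ] where
  L : Λ → ModuleCat.{0} S
  P : Λ → ModuleCat.{0} S
  I : Λ → ModuleCat.{0} S
  std : Λ → ModuleCat.{0} S
  costd : Λ → ModuleCat.{0} S
  finiteL : ∀ lam, Module.Finite S ↥(L lam)
  simpleL : ∀ lam, IsSimpleModule S ↥(L lam)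
  nonisoL : ∀ lam mu, lam ≠ mu → IsEmpty (↥(L lam) ≃ₗ[S] ↥(L mu))
  fullL : ∀ M : ModuleCat.{0} S, IsSimpleModule S ↥M → ∃ lam, Nonempty (↥M ≃ₗ[S] ↥(L lam))
  projCover : ∀ lam, IsProjCover S (P lam) (L lam)
  injHull : ∀ lam, IsInjHull S (I lam) (L lam)
  stdSpec : ∀ lam, ∃ K : Submodule S ↥(P lam),
    Nonempty (↥(std lam) ≃ₗ[S] (↥(P lam) ⧸ K)) ∧
    (∀ mu, IsCompFactor S (L mu) (ModuleCat.of S (↥(P lam) ⧸ K)) → mu ≤ lam) ∧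
    ∀ K' : Submodule S ↥(P lam),
      (∀ mu, IsCompFactor S (L mu) (ModuleCat.of S (↥(P lam) ⧸ K')) → mu ≤ lam) → K ≤ K'
  costdSpec : ∀ lam, ∃ V : Submodule S ↥(I lam),
    Nonempty (↥(costd lam) ≃ₗ[S] ↥V) ∧
    (∀ mu, IsCompFactor S (L mu) (ModuleCat.of S ↥V) → mu ≤ lam) ∧
    ∀ V' : Submodule S ↥(I lam),
      (∀ mu, IsCompFactor S (L mu) (ModuleCat.of S ↥V') → mu ≤ lam) → V' ≤ V
  multOne : ∀ lam, CompFactorMult S (L lam) (std lam) 1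
  projFilt : ∀ lam, ∃ (n : ℕ) (f : Fin (n + 1) → Submodule S ↥(P lam)) (g : Fin n → Λ),
    HasFiltrationWithSections S (P lam) n f (fun i => std (g i)) ∧
    (∀ i, lam ≤ g i) ∧ Nat.card {i : Fin n // g i = lam} = 1

variable {Λ : Type} [Fintype Λ] [PartialOrder Λ]

/-- `M` has a filtration with costandard sections, i.e. `M ∈ F(∇)`. -/
def InCostdFilt (Q : QHData S Λ) (M : ModuleCat.{0} S) : Prop :=
  ∃ (n : ℕ) (f : Fin (n + 1) → Submodule S ↥M) (g : Fin n → Λ),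
    HasFiltrationWithSections S M n f (fun i => Q.costd (g i))

/-- `M` has a filtration with standard sections, i.e. `M ∈ F(Δ)`. -/
def InStdFilt (Q : QHData S Λ) (M : ModuleCat.{0} S) : Prop :=
  ∃ (n : ℕ) (f : Fin (n + 1) → Submodule S ↥M) (g : Fin n → Λ),
    HasFiltrationWithSections S M n f (fun i => Q.std (g i))

/-- `0 → N 0 → N 1 → ⋯ → N (n+1) → 0` is exact. -/
def IsExactSeq (n : ℕ) (N : Fin (n + 2) → ModuleCat.{0} S)
    (f : ∀ i : Fin (n + 1), ↥(N i.castSucc) →ₗ[S] ↥(N i.succ)) : Prop :=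
  Function.Injective (f 0) ∧ Function.Surjective (f (Fin.last n)) ∧
    ∀ i : Fin n, LinearMap.range (f i.castSucc) = LinearMap.ker (f i.succ)

/-- `M` has a ∇-resolution (co-resolution by modules in `F(∇)`) of length `d`:
`0 → M → M₀ → ⋯ → M_d → 0` with each `Mᵢ ∈ F(∇)`. -/
def GfdLE (Q : QHData S Λ) (M : ModuleCat.{0} S) (d : ℕ) : Prop :=
  ∃ (N : Fin (d + 2) → ModuleCat.{0} S)
    (f : ∀ i : Fin (d + 1), ↥(N i.castSucc) →ₗ[S] ↥(N i.succ)),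
    IsExactSeq S d N f ∧ N 0 = M ∧ ∀ i : Fin (d + 1), InCostdFilt S Q (N i.succ)

/-- The ∇-filtration dimension (good filtration dimension) of a module. -/
noncomputable def gfd (Q : QHData S Λ) (M : ModuleCat.{0} S) : ℕ :=
  sInf {d | GfdLE S Q M d}

/-- `M` has a resolution `0 → M_d → ⋯ → M₀ → M → 0` with each `Mᵢ ∈ F(Δ)`. -/
def WfdLE (Q : QHData S Λ) (M : ModuleCat.{0} S) (d : ℕ) : Prop :=
  ∃ (N : Fin (d + 2) → ModuleCat.{0} S)
    (f : ∀ i : Fin (d + 1), ↥(N i.castSucc) →ₗ[S] ↥(N i.succ)),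
    IsExactSeq S d N f ∧ N (Fin.last (d + 1)) = M ∧
    ∀ i : Fin (d + 1), InStdFilt S Q (N i.castSucc)

/-- The Δ-filtration dimension of a module. -/
noncomputable def wfd (Q : QHData S Λ) (M : ModuleCat.{0} S) : ℕ :=
  sInf {d | WfdLE S Q M d}

/-- `M` has a projective resolution of length `d`. -/
def ProjdimLE (M : ModuleCat.{0} S) (d : ℕ) : Prop :=
  ∃ (N : Fin (d + 2) → ModuleCat.{0} S)
    (f : ∀ i : Fin (d + 1), ↥(N i.castSucc) →ₗ[S] ↥(N i.succ)),
    IsExactSeq S d N f ∧ N (Fin.last (d + 1)) = M ∧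
    ∀ i : Fin (d + 1), Module.Projective S ↥(N i.castSucc)

/-- The projective dimension of a module. -/
noncomputable def projdim (M : ModuleCat.{0} S) : ℕ :=
  sInf {d | ProjdimLE S M d}

/-- `M` has an injective resolution of length `d`. -/
def InjdimLE (M : ModuleCat.{0} S) (d : ℕ) : Prop :=
  ∃ (N : Fin (d + 2) → ModuleCat.{0} S)
    (f : ∀ i : Fin (d + 1), ↥(N i.castSucc) →ₗ[S] ↥(N i.succ)),
    IsExactSeq S d N f ∧ N 0 = M ∧
    ∀ i : Fin (d + 1), Module.Injective S ↥(N i.succ)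

/-- The injective dimension of a module. -/
noncomputable def injdim (M : ModuleCat.{0} S) : ℕ :=
  sInf {d | InjdimLE S M d}

/-- `gfd(S)`: the supremum of the ∇-filtration dimensions of all
finite-dimensional `S`-modules. -/
noncomputable def gfdAlg (Q : QHData S Λ) : ℕ :=
  sSup {d | ∃ M : ModuleCat.{0} S, Module.Finite S ↥M ∧ gfd S Q M = d}

/-- `wfd(S)`: the supremum of the Δ-filtration dimensions of all
finite-dimensional `S`-modules. -/
noncomputable def wfdAlg (Q : QHData S Λ) : ℕ :=
  sSup {d | ∃ M : ModuleCat.{0} S, Module.Finite S ↥M ∧ wfd S Q M = d}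

/-- The global dimension of `S`: the supremum of the projective dimensions of all
finite-dimensional `S`-modules. -/
noncomputable def globdim : ℕ :=
  sSup {d | ∃ M : ModuleCat.{0} S, Module.Finite S ↥M ∧ projdim S M = d}

/-- `Ext^n_S(A, B) ≠ 0`. -/
noncomputable def extNe (A B : ModuleCat.{0} S) (n : ℕ) : Prop :=
  Nontrivial ↥(((Ext ℤ (ModuleCat.{0} S) n).obj (Opposite.op A)).obj B)

/-- A simple-preserving duality on `S`: a contravariant, exact, fully faithful,
additive self-functor `D` on the category of finite-dimensional `S`-modules with
`D (D M) ≅ M` and `D (L lam) ≅ L lam` for all `lam`. -/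
structure Duality (Q : QHData S Λ) where
  D : ModuleCat.{0} S → ModuleCat.{0} S
  Dmap : ∀ {A B : ModuleCat.{0} S}, (↥A →ₗ[S] ↥B) → (↥(D B) →ₗ[S] ↥(D A))
  finD : ∀ M : ModuleCat.{0} S, Module.Finite S ↥M → Module.Finite S ↥(D M)
  Did : ∀ A : ModuleCat.{0} S, Module.Finite S ↥A →
    Dmap (LinearMap.id : ↥A →ₗ[S] ↥A) = LinearMap.id
  Dcomp : ∀ {A B C : ModuleCat.{0} S}, Module.Finite S ↥A → Module.Finite S ↥B →
    Module.Finite S ↥C → ∀ (f : ↥A →ₗ[S] ↥B) (g : ↥B →ₗ[S] ↥C),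
      Dmap (g ∘ₗ f) = Dmap f ∘ₗ Dmap g
  Dadd : ∀ {A B : ModuleCat.{0} S}, Module.Finite S ↥A → Module.Finite S ↥B →
    ∀ (f g : ↥A →ₗ[S] ↥B), Dmap (f + g) = Dmap f + Dmap g
  Dfull : ∀ {A B : ModuleCat.{0} S}, Module.Finite S ↥A → Module.Finite S ↥B →
    Function.Bijective (fun f : ↥A →ₗ[S] ↥B => Dmap f)
  Dexact : ∀ {A B C : ModuleCat.{0} S}, Module.Finite S ↥A → Module.Finite S ↥B →
    Module.Finite S ↥C → ∀ (f : ↥A →ₗ[S] ↥B) (g : ↥B →ₗ[S] ↥C),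
      Function.Injective f → Function.Surjective g →
      LinearMap.range f = LinearMap.ker g →
      Function.Injective (Dmap g) ∧ Function.Surjective (Dmap f) ∧
        LinearMap.range (Dmap g) = LinearMap.ker (Dmap f)
  Dinvol : ∀ M : ModuleCat.{0} S, Module.Finite S ↥M → Nonempty (↥(D (D M)) ≃ₗ[S] ↥M)
  DL : ∀ lam, Nonempty (↥(D (Q.L lam)) ≃ₗ[S] ↥(Q.L lam))

/-- Strong property A: `mu < lam` implies `gfd (L mu) < gfd (L lam)`. -/
def StrongPropA (Q : QHData S Λ) : Prop :=
  ∀ mu lam : Λ, mu < lam → gfd S Q (Q.L mu) < gfd S Q (Q.L lam)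

/-- Property A: `mu < lam` implies `gfd (L mu) ≤ gfd (L lam)`. -/
def PropA (Q : QHData S Λ) : Prop :=
  ∀ mu lam : Λ, mu < lam → gfd S Q (Q.L mu) ≤ gfd S Q (Q.L lam)

/-- Property B: `mu < lam` implies `wfd (∇ mu) ≤ wfd (∇ lam)`. -/
def PropB (Q : QHData S Λ) : Prop :=
  ∀ mu lam : Λ, mu < lam → wfd S Q (Q.costd mu) ≤ wfd S Q (Q.costd lam)

/-- Property C: `wfd (∇ lam) = gfd S - inj (∇ lam)` for all `lam`. -/
def PropC (Q : QHData S Λ) : Prop :=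
  ∀ lam : Λ, wfd S Q (Q.costd lam) = gfdAlg S Q - injdim S (Q.costd lam)

/-- Property D: `wfd (∇ lam) = wfd (L lam)` for all `lam`. -/
def PropD (Q : QHData S Λ) : Prop :=
  ∀ lam : Λ, wfd S Q (Q.costd lam) = wfd S Q (Q.L lam)

/-- Property E: `mu < lam` implies `inj (∇ mu) ≥ inj (∇ lam)`. -/
def PropE (Q : QHData S Λ) : Prop :=
  ∀ mu lam : Λ, mu < lam → injdim S (Q.costd lam) ≤ injdim S (Q.costd mu)

/-- The partial order is minimal for the quasi-hereditary structure: whenever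
`mu < lam` are adjacent, `L mu` is a composition factor of `Δ lam` or of `∇ lam`. -/
def MinimalOrder (Q : QHData S Λ) : Prop :=
  ∀ mu lam : Λ, mu < lam → (¬ ∃ nu, mu < nu ∧ nu < lam) →
    IsCompFactor S (Q.L mu) (Q.std lam) ∨ IsCompFactor S (Q.L mu) (Q.costd lam)

/-- `S` is connected (indecomposable as an algebra, i.e. one block): the only
central idempotents are `0` and `1`. -/
def ConnectedRing : Prop :=
  ∀ c : S, c * c = c → (∀ s : S, c * s = s * c) → c = 0 ∨ c = 1

/-- A tilting module: a module in `F(Δ) ∩ F(∇)`. -/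
def IsTilting (Q : QHData S Λ) (T : ModuleCat.{0} S) : Prop :=
  InStdFilt S Q T ∧ InCostdFilt S Q T

/-- The indecomposable tilting module `T(lam)`: an indecomposable tilting module in
which `L lam` occurs exactly once and all other composition factors `L mu` have
`mu < lam`. -/
def IsIndecTilting (Q : QHData S Λ) (lam : Λ) (T : ModuleCat.{0} S) : Prop :=
  IsTilting S Q T ∧ Nontrivial ↥T ∧
    (∀ A B : Submodule S ↥T, IsCompl A B → A = ⊥ ∨ B = ⊥) ∧
    CompFactorMult S (Q.L lam) T 1 ∧
    ∀ mu, IsCompFactor S (Q.L mu) T → mu = lam ∨ mu < lam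

/-- A full tilting module: a (finite-dimensional) tilting module having every
indecomposable tilting module as a direct summand. -/
def IsFullTilting (Q : QHData S Λ) (T : ModuleCat.{0} S) : Prop :=
  IsTilting S Q T ∧ Module.Finite S ↥T ∧
    ∀ (lam : Λ) (Tl : ModuleCat.{0} S), IsIndecTilting S Q lam Tl →
      ∃ Cc : ModuleCat.{0} S, Nonempty (↥T ≃ₗ[S] (↥Tl × ↥Cc))

/-- The Ringel dual ring `S' = End_S(T)^op`. -/
abbrev RingelDualRing (T : ModuleCat.{0} S) : Type := (Module.End S ↥T)ᵐᵒᵖ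

/-- `Hom_S(T, X)` is a module over `S' = End_S(T)^op` via `f • φ = φ ∘ f`. -/
instance homTModule (T X : ModuleCat.{0} S) :
    Module (RingelDualRing S T) (↥T →ₗ[S] ↥X) where
  smul a φ := φ ∘ₗ a.unop
  one_smul φ := rfl
  mul_smul a b φ := rfl
  smul_zero a := rfl
  smul_add a φ ψ := rfl
  add_smul a b φ := by
    ext x
    show φ ((a.unop + b.unop) x) = φ (a.unop x) + φ (b.unop x)
    rw [LinearMap.add_apply, map_add]
  zero_smul φ := by
    ext x
    show φ ((0 : Module.End S ↥T) x) = 0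
    rw [LinearMap.zero_apply, map_zero]

/-- The `S'`-module `Hom_S(T, X)`, i.e. the image of `X` under the functor
`F = Hom_S(T, -)`. -/
noncomputable def homTMod (T X : ModuleCat.{0} S) :
    ModuleCat.{0} (RingelDualRing S T) :=
  ModuleCat.of (RingelDualRing S T) (↥T →ₗ[S] ↥X)

/-- `Q'` is a Ringel dual quasi-hereditary structure for `(Q, T)`:
`T` is a full tilting module, `Q'` is a quasi-hereditary structure on
`S' = End_S(T)^op` for the opposite poset, and its standard modules are
`Δ'(lam) = Hom_S(T, ∇(lam))`. -/
def IsRingelDualData (Q : QHData S Λ) (T : ModuleCat.{0} S)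
    (Q' : QHData (RingelDualRing S T) Λᵒᵈ) : Prop :=
  IsFullTilting S Q T ∧
    ∀ lam : Λ, Nonempty
      (↥(Q'.std (OrderDual.toDual lam)) ≃ₗ[RingelDualRing S T]
        (↥T →ₗ[S] ↥(Q.costd lam)))

/-- `0 → T_d → ⋯ → T_0 → M → 0` exact with all `T_i` tilting modules. -/
def TiltResLE (Q : QHData S Λ) (M : ModuleCat.{0} S) (d : ℕ) : Prop :=
  ∃ (N : Fin (d + 2) → ModuleCat.{0} S)
    (f : ∀ i : Fin (d + 1), ↥(N i.castSucc) →ₗ[S] ↥(N i.succ)),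
    IsExactSeq S d N f ∧ N (Fin.last (d + 1)) = M ∧
    ∀ i : Fin (d + 1), IsTilting S Q (N i.castSucc)

/-- An idempotent `e` is primitive if it is nonzero and is not the sum of two
nonzero orthogonal idempotents. -/
def IsPrimitiveIdempotent (e : S) : Prop :=
  e * e = e ∧ e ≠ 0 ∧ ∀ a b : S, a * a = a → b * b = b → a * b = 0 → b * a = 0 →
    e = a + b → a = 0 ∨ b = 0

/-- The additive subgroup `e•M = {m | e • m = m}` of `M` (for `e` idempotent). -/
def cornerSet (eG : S) (M : ModuleCat.{0} S) : AddSubgroup ↥M where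
  carrier := {m | eG • m = m}
  add_mem' := by
    intro a b ha hb
    simp only [Set.mem_setOf_eq] at *
    rw [smul_add, ha, hb]
  zero_mem' := by
    simp only [Set.mem_setOf_eq]
    rw [smul_zero]
  neg_mem' := by
    intro a ha
    simp only [Set.mem_setOf_eq] at *
    rw [smul_neg, ha]

/-- The `R`-module structure on `e•M`, where `ι : R → S` identifies `R` with the
corner ring `eSe` (as a non-unital ring, with `ι 1 = e`). -/
def cornerModuleStructure (R : Type) [Ring R] (ι : R →ₙ+* S) (eG : S)
    (hone : ι 1 = eG) (hrange : ∀ r : R, eG * ι r * eG = ι r)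
    (M : ModuleCat.{0} S) : Module R ↥(cornerSet S eG M) where
  smul r m := ⟨ι r • (m : ↥M), by
    have hm : eG • (m : ↥M) = (m : ↥M) := m.2
    show eG • (ι r • (m : ↥M)) = ι r • (m : ↥M)
    have h : eG • (ι r • (m : ↥M)) = (eG * ι r * eG) • (m : ↥M) := by
      rw [mul_assoc, mul_smul, mul_smul, hm]
    rw [h, hrange]⟩
  one_smul m := by
    apply Subtype.ext
    show ι 1 • (m : ↥M) = (m : ↥M)
    rw [hone]
    exact m.2
  mul_smul r s m := by
    apply Subtype.ext
    show ι (r * s) • (m : ↥M) = ι r • (ι s • (m : ↥M))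
    rw [map_mul, mul_smul]
  smul_zero r := by
    apply Subtype.ext
    show ι r • (0 : ↥M) = 0
    rw [smul_zero]
  smul_add r m n := by
    apply Subtype.ext
    show ι r • ((m : ↥M) + (n : ↥M)) = ι r • (m : ↥M) + ι r • (n : ↥M)
    rw [smul_add]
  add_smul r s m := by
    apply Subtype.ext
    show ι (r + s) • (m : ↥M) = ι r • (m : ↥M) + ι s • (m : ↥M)
    rw [map_add, add_smul]
  zero_smul m := by
    apply Subtype.ext
    show ι 0 • (m : ↥M) = 0
    rw [map_zero, zero_smul]

/-- The `R`-module `e•M`, where `R ≅ eSe` via `ι`. -/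
noncomputable def cornerMod (R : Type) [Ring R] (ι : R →ₙ+* S) (eG : S)
    (hone : ι 1 = eG) (hrange : ∀ r : R, eG * ι r * eG = ι r)
    (M : ModuleCat.{0} S) : ModuleCat.{0} R :=
  @ModuleCat.of R _ ↥(cornerSet S eG M) _
    (cornerModuleStructure S R ι eG hone hrange M)

end QHPaper

/-
Let `I` be the kernel of `S → S(Π)`. Restriction of scalars along this map is exact and preserves
(co)standard filtrations, so it turns resolutions over `S(Π)` into resolutions over `S`.

Conversely, a Δ-resolution of an `S(Π)`-module `M` over `S` is truncated by `X ↦ X ⧸ I • X`. If `X`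
has a standard filtration, `I • X` is filtered by the `Δ γ` with `γ ∉ Π`, and `Ext (Δ γ) T = 0` in
all degrees whenever `I` annihilates `T`; since `I` is idempotent, this makes the truncation exact.
It kills `Δ γ` for `γ ∉ Π` and fixes it for `γ ∈ Π`. A ∇-resolution is truncated by the functor
`X ↦ {x | I x = 0}`, whose exactness on a sequence can be tested by lifting maps out of the modules
`P ν ⧸ I • P ν`. These are filtered by standard modules, so the lifting obstructions vanish by
`Ext (Δ ν) (∇ γ) = 0` in positive degrees. Both functors fix `M`, whose own obstructions vanish
because `I` annihilates it.
-/

namespace QHTruncation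

section ExtVanishing

open Abelian

universe w v u

variable {C : Type u} [Category.{v} C] [Abelian C] [HasExt.{w} C] {T : ShortComplex C}
  {Y : C} {n : ℕ}

theorem subsingleton_ext_X₂ (hT : T.ShortExact) (h₁ : Subsingleton (Ext T.X₁ Y n))
    (h₃ : Subsingleton (Ext T.X₃ Y n)) : Subsingleton (Ext T.X₂ Y n) :=
  subsingleton_of_forall_eq 0 fun x => by
    obtain ⟨y, rfl⟩ := Ext.contravariant_sequence_exact₂ hT Y x (Subsingleton.elim _ _)
    rw [Subsingleton.elim y 0, Ext.comp_zero]

theorem subsingleton_ext_X₃ (hT : T.ShortExact) (h₁ : Subsingleton (Ext T.X₁ Y n))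
    (h₂ : Subsingleton (Ext T.X₂ Y (n + 1))) : Subsingleton (Ext T.X₃ Y (n + 1)) :=
  subsingleton_of_forall_eq 0 fun x => by
    obtain ⟨y, rfl⟩ := Ext.contravariant_sequence_exact₃ hT Y x (Subsingleton.elim _ _)
      (add_comm 1 n)
    rw [Subsingleton.elim y 0, Ext.comp_zero]

theorem subsingleton_ext_X₁ (hT : T.ShortExact) (h₂ : Subsingleton (Ext T.X₂ Y n))
    (h₃ : Subsingleton (Ext T.X₃ Y (n + 1))) : Subsingleton (Ext T.X₁ Y n) :=
  subsingleton_of_forall_eq 0 fun x => by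
    obtain ⟨y, rfl⟩ := Ext.contravariant_sequence_exact₁ hT Y x (add_comm 1 n)
      (Subsingleton.elim _ _)
    rw [Subsingleton.elim y 0, Ext.comp_zero]

theorem subsingleton_ext_to_X₂ (hT : T.ShortExact) (h₁ : Subsingleton (Ext Y T.X₁ n))
    (h₃ : Subsingleton (Ext Y T.X₃ n)) : Subsingleton (Ext Y T.X₂ n) :=
  subsingleton_of_forall_eq 0 fun x => by
    obtain ⟨y, rfl⟩ := Ext.covariant_sequence_exact₂ Y hT x (Subsingleton.elim _ _)
    rw [Subsingleton.elim y 0, Ext.zero_comp]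

theorem subsingleton_ext_to_X₃ (hT : T.ShortExact) (h₂ : Subsingleton (Ext Y T.X₂ n))
    (h₁ : Subsingleton (Ext Y T.X₁ (n + 1))) : Subsingleton (Ext Y T.X₃ n) :=
  subsingleton_of_forall_eq 0 fun x => by
    obtain ⟨y, rfl⟩ := Ext.covariant_sequence_exact₃ Y hT x rfl (Subsingleton.elim _ _)
    rw [Subsingleton.elim y 0, Ext.zero_comp]

theorem exists_lift_of_subsingleton_ext (hT : T.ShortExact) (h : Subsingleton (Ext Y T.X₁ 1))
    (φ : Y ⟶ T.X₃) : ∃ ψ : Y ⟶ T.X₂, ψ ≫ T.g = φ := by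
  obtain ⟨y, hy⟩ := Ext.covariant_sequence_exact₃ Y hT (Ext.mk₀ φ) (zero_add 1)
    (Subsingleton.elim _ _)
  rw [← Ext.mk₀_homEquiv₀_apply y, Ext.mk₀_comp_mk₀] at hy
  exact ⟨_, (Ext.mk₀_bijective _ _).1 hy⟩

theorem exists_extend_of_subsingleton_ext (hT : T.ShortExact) (h : Subsingleton (Ext T.X₃ Y 1))
    (φ : T.X₁ ⟶ Y) : ∃ ψ : T.X₂ ⟶ Y, T.f ≫ ψ = φ := by
  obtain ⟨y, hy⟩ := Ext.contravariant_sequence_exact₁ hT Y (Ext.mk₀ φ) (add_zero 1)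
    (Subsingleton.elim _ _)
  rw [← Ext.mk₀_homEquiv₀_apply y, Ext.mk₀_comp_mk₀] at hy
  exact ⟨_, (Ext.mk₀_bijective _ _).1 hy⟩

theorem subsingleton_ext_one_of_forall_extend (hT : T.ShortExact)
    (h₂ : Subsingleton (Ext T.X₂ Y 1)) (h : ∀ φ : T.X₁ ⟶ Y, ∃ ψ : T.X₂ ⟶ Y, T.f ≫ ψ = φ) :
    Subsingleton (Ext T.X₃ Y 1) :=
  subsingleton_of_forall_eq 0 fun x => by
    obtain ⟨y, rfl⟩ := Ext.contravariant_sequence_exact₃ hT Y x (Subsingleton.elim _ _)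
      (add_zero 1)
    obtain ⟨ψ, hψ⟩ := h (Ext.homEquiv₀ y)
    rw [← Ext.mk₀_homEquiv₀_apply y, ← hψ, ← Ext.mk₀_comp_mk₀,
      ShortComplex.ShortExact.extClass_comp_assoc hT]

theorem subsingleton_ext_zero_iff {X : C} :
    Subsingleton (Ext X Y 0) ↔ Subsingleton (X ⟶ Y) :=
  Ext.addEquiv₀.subsingleton_congr

theorem subsingleton_ext_of_isZero {X : C} (hX : Limits.IsZero X) :
    Subsingleton (Ext X Y n) :=
  subsingleton_of_forall_eq 0 fun x => by
    rw [← Ext.mk₀_id_comp x, hX.eq_of_src (𝟙 X) 0, Ext.mk₀_zero, Ext.zero_comp]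

theorem subsingleton_ext_to_of_isZero {X : C} (hY : Limits.IsZero Y) :
    Subsingleton (Ext X Y n) :=
  subsingleton_of_forall_eq 0 fun x => by
    rw [← Ext.comp_mk₀_id x, hY.eq_of_src (𝟙 Y) 0, Ext.mk₀_zero, Ext.comp_zero]

theorem subsingleton_ext_of_iso {X X' : C} (i : X ≅ X') (h : Subsingleton (Ext X Y n)) :
    Subsingleton (Ext X' Y n) :=
  subsingleton_of_forall_eq 0 fun x => by
    rw [← Ext.mk₀_id_comp x, ← i.inv_hom_id, ← Ext.mk₀_comp_mk₀_assoc,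
      Subsingleton.elim ((Ext.mk₀ i.hom).comp x (zero_add n)) 0, Ext.comp_zero]

end ExtVanishing

section ShortExact

universe v u

variable {R : Type u} [Ring R]

/-- `0 → A → B → C → 0` is a short exact sequence of modules. -/
structure IsShortExact {A B C : Type*} [AddCommGroup A] [AddCommGroup B] [AddCommGroup C]
    [Module R A] [Module R B] [Module R C] (f : A →ₗ[R] B) (g : B →ₗ[R] C) : Prop where
  injective : Function.Injective f
  exact : Function.Exact f g
  surjective : Function.Surjective g

section

variable {A B C : Type*} [AddCommGroup A] [AddCommGroup B] [AddCommGroup C]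
    [Module R A] [Module R B] [Module R C] {f : A →ₗ[R] B} {g : B →ₗ[R] C}

theorem isShortExact_subtype_mkQ (N : Submodule R A) : IsShortExact N.subtype N.mkQ :=
  ⟨N.subtype_injective, LinearMap.exact_subtype_mkQ N, N.mkQ_surjective⟩

theorem isShortExact_subtype_ker (hg : Function.Surjective g) :
    IsShortExact (LinearMap.ker g).subtype g :=
  ⟨Submodule.subtype_injective _, LinearMap.exact_subtype_ker_map g, hg⟩

theorem isShortExact_subtype_codRestrict (h : LinearMap.range f = LinearMap.ker g) :
    IsShortExact (LinearMap.ker f).subtype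
      (f.codRestrict (LinearMap.ker g) fun a => h.le ⟨a, rfl⟩) := by
  refine ⟨Submodule.subtype_injective _, fun a => ?_, fun ⟨b, hb⟩ => ?_⟩
  · simp [← Subtype.coe_inj]
  · obtain ⟨a, rfl⟩ := h.ge hb
    exact ⟨a, rfl⟩

theorem isShortExact_liftQ_mkQ (h : LinearMap.range f = LinearMap.ker g) :
    IsShortExact ((LinearMap.range f).liftQ g h.le) (LinearMap.range g).mkQ := by
  refine ⟨?_, fun c => ?_, Submodule.mkQ_surjective _⟩
  · rw [← LinearMap.ker_eq_bot, Submodule.ker_liftQ_eq_bot _ _ _ h.ge]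
  · rw [← LinearMap.mem_ker, Submodule.ker_mkQ, ← Submodule.range_liftQ _ g h.le]
    exact Iff.rfl

theorem isShortExact_inclusion_mkQ {N N' : Submodule R A} (h : N ≤ N') :
    IsShortExact (Submodule.inclusion h) (N.comap N'.subtype).mkQ :=
  ⟨Submodule.inclusion_injective h, fun b =>
    (Submodule.Quotient.mk_eq_zero _).trans
      ⟨fun hb => ⟨⟨b, hb⟩, rfl⟩, by rintro ⟨a, rfl⟩; exact a.2⟩, Submodule.mkQ_surjective _⟩

theorem IsShortExact.linearEquiv_left {A' : Type*} [AddCommGroup A'] [Module R A']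
    (h : IsShortExact f g) (e : A' ≃ₗ[R] A) : IsShortExact (f ∘ₗ e.toLinearMap) g :=
  ⟨h.injective.comp e.injective, e.surjective.comp_exact_iff_exact.2 h.exact, h.surjective⟩

theorem IsShortExact.linearEquiv_right {C' : Type*} [AddCommGroup C'] [Module R C']
    (h : IsShortExact f g) (e : C ≃ₗ[R] C') : IsShortExact f (e.toLinearMap ∘ₗ g) :=
  ⟨h.injective, fun b => by simpa using h.exact b, e.surjective.comp h.surjective⟩

theorem IsShortExact.linearEquiv_middle {B' : Type*} [AddCommGroup B'] [Module R B']
    (h : IsShortExact f g) (e : B ≃ₗ[R] B') :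
    IsShortExact (e.toLinearMap ∘ₗ f) (g ∘ₗ e.symm.toLinearMap) :=
  ⟨e.injective.comp h.injective, fun b => by
    simp [h.exact (e.symm b), ← LinearEquiv.eq_symm_apply],
    h.surjective.comp e.symm.surjective⟩

end

theorem IsShortExact.shortExact {A B C : Type v} [AddCommGroup A] [AddCommGroup B]
    [AddCommGroup C] [Module R A] [Module R B] [Module R C] {f : A →ₗ[R] B} {g : B →ₗ[R] C}
    (h : IsShortExact f g) :
    (ModuleCat.shortComplexOfCompEqZero (M := ModuleCat.of R A) (N := ModuleCat.of R B)
      (L := ModuleCat.of R C) f g h.exact.linearMap_comp_eq_zero).ShortExact :=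
  ModuleCat.shortComplex_shortExact _ h.exact h.injective h.surjective

end ShortExact

section FilteredBy

universe v u

variable {R : Type u} [Ring R] {ι : Type*}

/-- `FilteredBy D M`: the module `M` has a finite filtration all of whose sections are isomorphic
to members of the family `D`. -/
inductive FilteredBy (D : ι → ModuleCat.{v} R) : ModuleCat.{v} R → Prop
  | of_subsingleton (M : ModuleCat.{v} R) (h : Subsingleton M) : FilteredBy D M
  | extension (A B : ModuleCat.{v} R) (i : ι) (f : A →ₗ[R] B) (g : B →ₗ[R] D i)
      (h : IsShortExact f g) (hA : FilteredBy D A) : FilteredBy D B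

namespace FilteredBy

variable {D : ι → ModuleCat.{v} R} {A B C : ModuleCat.{v} R}

theorem of_linearEquiv (hA : FilteredBy D A) (e : A ≃ₗ[R] B) : FilteredBy D B := by
  cases hA with
  | of_subsingleton _ h => exact of_subsingleton _ e.symm.toEquiv.subsingleton
  | extension A' _ i f g h hA' => exact extension A' _ i _ _ (h.linearEquiv_middle e) hA'

theorem extend {f : A →ₗ[R] B} {g : B →ₗ[R] C} (h : IsShortExact f g) (hA : FilteredBy D A)
    (hC : Subsingleton C ∨ ∃ i, Nonempty (C ≃ₗ[R] D i)) : FilteredBy D B := by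
  rcases hC with hC | ⟨i, ⟨e⟩⟩
  · refine hA.of_linearEquiv (LinearEquiv.ofBijective f ⟨h.injective, fun b => ?_⟩)
    exact (h.exact b).1 (Subsingleton.elim _ _)
  · exact extension A B i f _ (h.linearEquiv_right e) hA

end FilteredBy

end FilteredBy

section Filtrations

open QHPaper

variable {S ι : Type} [Ring S] {D : ι → ModuleCat.{0} S}

theorem FilteredBy.of_hasFiltrationWithSections {M : ModuleCat.{0} S} {n : ℕ}
    {F : Fin (n + 1) → Submodule S M} {s : Fin n → ι}
    (h : HasFiltrationWithSections S M n F (fun i => D (s i))) : FilteredBy D M := by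
  obtain ⟨hmono, hbot, htop, hsec⟩ := h
  have step (i : Fin (n + 1)) : FilteredBy D (ModuleCat.of S (F i)) := by
    induction i using Fin.induction with
    | zero => exact of_subsingleton _ (Submodule.subsingleton_iff_eq_bot.2 hbot)
    | succ i ih =>
      exact extend (C := ModuleCat.of S (subquot S (F i.castSucc) (F i.succ)))
        (isShortExact_inclusion_mkQ (hmono Fin.castSucc_lt_succ.le)) ih (.inr ⟨s i, hsec i⟩)
  exact (step (Fin.last n)).of_linearEquiv (LinearEquiv.ofTop _ htop)

/-- Pushing two submodules forward along an injection does not change their subquotient. -/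
noncomputable def subquotMapEquiv {M N : ModuleCat.{0} S} {f : M →ₗ[S] N}
    (hf : Function.Injective f) (A B : Submodule S M) :
    subquot S (A.map f) (B.map f) ≃ₗ[S] subquot S A B :=
  (Submodule.Quotient.equiv _ _ (Submodule.equivMapOfInjective f hf B) (by
    ext ⟨_, b, hb, rfl⟩
    constructor
    · rintro ⟨x, hx, hxb⟩
      exact ⟨x, hx, congrArg Subtype.val hxb⟩
    · rintro ⟨x, hx, hxb⟩
      obtain rfl := hf hxb
      exact ⟨⟨x, hb⟩, hx, rfl⟩)).symm

/-- The subquotient of `⊤` by the kernel of a surjection is its codomain. -/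
noncomputable def subquotTopEquiv {A M N : ModuleCat.{0} S} {f : A →ₗ[S] M} {g : M →ₗ[S] N}
    (h : IsShortExact f g) : subquot S (LinearMap.range f) ⊤ ≃ₗ[S] N :=
  (Submodule.quotEquivOfEq _ (LinearMap.ker (g ∘ₗ (⊤ : Submodule S M).subtype)) (by
    rw [← h.exact.linearMap_ker_eq, LinearMap.ker_comp])).trans
  ((g ∘ₗ (⊤ : Submodule S M).subtype).quotKerEquivOfSurjective
    (h.surjective.comp fun x => ⟨⟨x, trivial⟩, rfl⟩))

theorem hasFiltrationWithSections_snoc {A B : ModuleCat.{0} S} {i : ι} {f : A →ₗ[S] B}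
    {g : B →ₗ[S] D i} (h : IsShortExact f g) {n : ℕ} {F : Fin (n + 1) → Submodule S A}
    {s : Fin n → ι} (hF : HasFiltrationWithSections S A n F (fun j => D (s j))) :
    HasFiltrationWithSections S B (n + 1)
      (Fin.snoc (α := fun _ => Submodule S B) (fun j => (F j).map f) ⊤)
      (fun j => D (Fin.snoc (α := fun _ => ι) s i j)) := by
  obtain ⟨hmono, hbot, htop, hsec⟩ := hF
  refine ⟨Fin.monotone_iff_le_succ.2 fun j => ?_, ?_, Fin.snoc_last .., fun j => ?_⟩
  · induction j using Fin.lastCases with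
    | last => rw [Fin.succ_last, Fin.snoc_last]; exact le_top
    | cast j =>
      rw [← Fin.castSucc_succ, Fin.snoc_castSucc, Fin.snoc_castSucc]
      exact Submodule.map_mono (hmono Fin.castSucc_lt_succ.le)
  · rw [← Fin.castSucc_zero, Fin.snoc_castSucc, hbot, Submodule.map_bot]
  · beta_reduce
    induction j using Fin.lastCases with
    | last =>
      rw [Fin.succ_last, Fin.snoc_last, Fin.snoc_last, Fin.snoc_castSucc, htop,
        Submodule.map_top]
      exact ⟨subquotTopEquiv h⟩
    | cast j =>
      rw [← Fin.castSucc_succ, Fin.snoc_castSucc, Fin.snoc_castSucc, Fin.snoc_castSucc]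
      exact (hsec j).map (subquotMapEquiv h.injective _ _).trans

theorem filteredBy_iff_exists_hasFiltrationWithSections {M : ModuleCat.{0} S} :
    FilteredBy D M ↔ ∃ (n : ℕ) (F : Fin (n + 1) → Submodule S M) (s : Fin n → ι),
      HasFiltrationWithSections S M n F (fun i => D (s i)) := by
  refine ⟨fun h => ?_, fun ⟨_, _, _, h⟩ => .of_hasFiltrationWithSections h⟩
  induction h with
  | of_subsingleton M h =>
    exact ⟨0, fun _ => ⊥, Fin.elim0, monotone_const, rfl, Subsingleton.elim _ _, Fin.rec0⟩
  | extension A B i f g h _ ih =>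
    obtain ⟨n, F, s, hF⟩ := ih
    exact ⟨n + 1, _, _, hasFiltrationWithSections_snoc h hF⟩

end Filtrations

section Reduction

universe v u

variable {R : Type u} [Ring R] {I : Ideal R}

section

variable {A B C : Type*} [AddCommGroup A] [AddCommGroup B] [AddCommGroup C]
    [Module R A] [Module R B] [Module R C] {f : A →ₗ[R] B} {g : B →ₗ[R] C}

theorem apply_mem_smul_top (f : A →ₗ[R] B) {a : A} (ha : a ∈ I • (⊤ : Submodule R A)) :
    f a ∈ I • (⊤ : Submodule R B) :=
  Submodule.smul_top_le_comap_smul_top I f ha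

theorem exists_mem_smul_top_apply_eq (hg : Function.Surjective g) {c : C}
    (hc : c ∈ I • (⊤ : Submodule R C)) : ∃ b ∈ I • (⊤ : Submodule R B), g b = c := by
  rwa [← LinearMap.range_eq_top.2 hg, ← Submodule.map_top, ← Submodule.map_smul''] at hc

theorem le_annihilator_quotient_smul_top :
    I ≤ Module.annihilator R (A ⧸ I • (⊤ : Submodule R A)) := fun a ha =>
  Module.mem_annihilator.2 fun x => by
    obtain ⟨x, rfl⟩ := Submodule.mkQ_surjective _ x
    rw [← map_smul]
    exact (Submodule.Quotient.mk_eq_zero _).2 (Submodule.smul_mem_smul ha trivial)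

theorem smul_top_le_ker (hB : I ≤ Module.annihilator R B) (f : A →ₗ[R] B) :
    I • ⊤ ≤ LinearMap.ker f :=
  Submodule.smul_le.2 fun a ha x _ => by
    rw [LinearMap.mem_ker, map_smul, Module.mem_annihilator.1 (hB ha)]

theorem smul_top_eq_bot (hA : I ≤ Module.annihilator R A) : I • (⊤ : Submodule R A) = ⊥ := by
  simpa using smul_top_le_ker hA LinearMap.id

theorem le_annihilator_smul_top (hA : I * I ≤ Module.annihilator R A) :
    I ≤ Module.annihilator R ↥(I • (⊤ : Submodule R A)) := fun a ha =>
  Module.mem_annihilator.2 fun x => Subtype.ext <| (Submodule.mem_bot R).1 <| by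
    rw [← smul_top_eq_bot hA, Submodule.mul_smul]
    exact Submodule.smul_mem_smul ha x.2

theorem smul_top_smul_top (hI : I * I = I) :
    I • (⊤ : Submodule R ↥(I • (⊤ : Submodule R A))) = ⊤ := by
  apply Submodule.map_injective_of_injective (I • (⊤ : Submodule R A)).subtype_injective
  rw [Submodule.map_smul'', Submodule.map_subtype_top, ← Submodule.mul_smul, hI]

theorem isShortExact_smul_top (I : Ideal R) (h : IsShortExact f g) :
    IsShortExact
      (f.restrict (p := (I • (⊤ : Submodule R B)).comap f) (q := I • ⊤) fun _ ha => ha)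
      (g.restrict (p := I • (⊤ : Submodule R B)) (q := I • ⊤) fun _ => apply_mem_smul_top g) where
  injective _ _ hab := Subtype.ext (h.injective (congrArg Subtype.val hab))
  exact := by
    rintro ⟨b, hb⟩
    constructor
    · intro hgb
      obtain ⟨a, rfl⟩ := (h.exact b).1 (congrArg Subtype.val hgb)
      exact ⟨⟨a, hb⟩, rfl⟩
    · rintro ⟨a, ha⟩
      exact Subtype.ext ((h.exact b).2 ⟨a, congrArg Subtype.val ha⟩)
  surjective := by
    rintro ⟨c, hc⟩
    obtain ⟨b, hb, rfl⟩ := exists_mem_smul_top_apply_eq h.surjective hc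
    exact ⟨⟨b, hb⟩, rfl⟩

theorem IsShortExact.mapQ_smul_top (h : IsShortExact f g)
    (hcomap : (I • (⊤ : Submodule R B)).comap f = I • ⊤) :
    IsShortExact (Submodule.mapQ (I • ⊤) (I • ⊤) f (Submodule.smul_top_le_comap_smul_top I f))
      (Submodule.mapQ (I • ⊤) (I • ⊤) g (Submodule.smul_top_le_comap_smul_top I g)) where
  injective := by
    rw [← LinearMap.ker_eq_bot, Submodule.ker_mapQ, hcomap, Submodule.mkQ_map_self]
  exact := by
    intro b
    obtain ⟨b, rfl⟩ := Submodule.mkQ_surjective _ b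
    constructor
    · intro hb
      obtain ⟨b', hb', hgb⟩ := exists_mem_smul_top_apply_eq h.surjective
        ((Submodule.Quotient.mk_eq_zero _).1 hb)
      obtain ⟨a, ha⟩ := (h.exact (b - b')).1 (by rw [map_sub, hgb, sub_self])
      refine ⟨Submodule.mkQ _ a, (Submodule.Quotient.eq _).2 ?_⟩
      rwa [ha, sub_sub_cancel_left, neg_mem_iff]
    · rintro ⟨a, ha⟩
      obtain ⟨a, rfl⟩ := Submodule.mkQ_surjective _ a
      rw [← ha]
      exact congrArg (Submodule.mkQ _) (h.exact.apply_apply_eq_zero a)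
  surjective := by
    intro c
    obtain ⟨c, rfl⟩ := Submodule.mkQ_surjective _ c
    obtain ⟨b, rfl⟩ := h.surjective c
    exact ⟨Submodule.mkQ _ b, rfl⟩

end

section

variable [Small.{v} R] {A B C : ModuleCat.{v} R} {f : A →ₗ[R] B} {g : B →ₗ[R] C}

variable (I) in
/-- All extension groups, including `Hom`, from `X` to modules annihilated by `I` vanish. -/
def IsLeftOrthogonal (X : ModuleCat.{v} R) : Prop :=
  ∀ T : ModuleCat.{v} R, I ≤ Module.annihilator R T → ∀ n, Subsingleton (Abelian.Ext X T n)

variable (I) in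
/-- `I • X` is left orthogonal to the modules annihilated by `I`; such modules are acyclic for the
reduction functor `X ↦ X ⧸ I • X`. -/
def IsReductionAcyclic (X : ModuleCat.{v} R) : Prop :=
  IsLeftOrthogonal I (ModuleCat.of R ↥(I • (⊤ : Submodule R X)))

theorem IsLeftOrthogonal.smul_top_eq_top (h : IsLeftOrthogonal I A) :
    I • (⊤ : Submodule R A) = ⊤ := by
  have := subsingleton_ext_zero_iff.1
    (h (ModuleCat.of R (A ⧸ I • (⊤ : Submodule R A))) le_annihilator_quotient_smul_top 0)
  have h0 : (I • (⊤ : Submodule R A)).mkQ = 0 := congrArg ModuleCat.Hom.hom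
    (Subsingleton.elim (ModuleCat.ofHom (I • (⊤ : Submodule R A)).mkQ) 0)
  rw [← Submodule.ker_mkQ (I • (⊤ : Submodule R A)), h0, LinearMap.ker_zero]

theorem IsReductionAcyclic.of_le_annihilator (hA : I ≤ Module.annihilator R A) :
    IsReductionAcyclic I A := fun _ _ _ =>
  have := Submodule.subsingleton_iff_eq_bot.2 (smul_top_eq_bot hA)
  subsingleton_ext_of_isZero (ModuleCat.isZero_of_subsingleton _)

theorem IsReductionAcyclic.of_subsingleton [Subsingleton A] : IsReductionAcyclic I A :=
  .of_le_annihilator fun _ _ => Module.mem_annihilator.2 fun _ => Subsingleton.elim _ _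

theorem IsReductionAcyclic.of_isLeftOrthogonal (hA : IsLeftOrthogonal I A) :
    IsReductionAcyclic I A := fun T hT n =>
  subsingleton_ext_of_iso (LinearEquiv.ofTop _ hA.smul_top_eq_top).symm.toModuleIso (hA T hT n)

/- A map from `f ⁻¹ (I • B)` to a module annihilated by `I` extends to `I • B`, where it has to
vanish because `I` is idempotent. -/
theorem IsReductionAcyclic.comap_smul_top_eq (hI : I * I = I) (h : IsShortExact f g)
    (hC : IsReductionAcyclic I C) : (I • (⊤ : Submodule R B)).comap f = I • ⊤ := by
  refine le_antisymm (fun a ha => ?_) (Submodule.smul_top_le_comap_smul_top I f)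
  let W := (I • (⊤ : Submodule R B)).comap f
  let π : W →ₗ[R] A ⧸ I • (⊤ : Submodule R A) := (I • (⊤ : Submodule R A)).mkQ ∘ₗ W.subtype
  obtain ⟨ψ, hψ⟩ := exists_extend_of_subsingleton_ext
    (Y := ModuleCat.of R (A ⧸ I • (⊤ : Submodule R A)))
    (isShortExact_smul_top I h).shortExact
    (hC _ le_annihilator_quotient_smul_top 1) (ModuleCat.ofHom π)
  have hψ0 (x : ↥(I • (⊤ : Submodule R B))) : ψ x = 0 :=
    smul_top_le_ker le_annihilator_quotient_smul_top ψ.hom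
      (by rw [smul_top_smul_top hI]; trivial)
  have hπ : π ⟨a, ha⟩ = 0 := by
    rw [← hψ0 ⟨f a, ha⟩]
    exact (ConcreteCategory.congr_hom hψ (⟨a, ha⟩ : W)).symm
  exact (Submodule.Quotient.mk_eq_zero _).1 hπ

theorem IsReductionAcyclic.extension (hI : I * I = I) (h : IsShortExact f g)
    (hA : IsReductionAcyclic I A) (hC : IsReductionAcyclic I C) : IsReductionAcyclic I B := by
  intro T hT n
  unfold IsReductionAcyclic at hA
  rw [← hC.comap_smul_top_eq hI h] at hA
  exact subsingleton_ext_X₂ (isShortExact_smul_top I h).shortExact (hA T hT n) (hC T hT n)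

theorem IsReductionAcyclic.kernel (hI : I * I = I) (h : IsShortExact f g)
    (hB : IsReductionAcyclic I B) (hC : IsReductionAcyclic I C) : IsReductionAcyclic I A := by
  intro T hT n
  rw [← hC.comap_smul_top_eq hI h]
  exact subsingleton_ext_X₁ (isShortExact_smul_top I h).shortExact (hB T hT n) (hC T hT (n + 1))

theorem FilteredBy.isReductionAcyclic {ι : Type*} {D : ι → ModuleCat.{v} R} (hI : I * I = I)
    (hD : ∀ i, IsReductionAcyclic I (D i)) (hA : FilteredBy D A) : IsReductionAcyclic I A := by
  induction hA with
  | of_subsingleton A h => exact .of_subsingleton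
  | extension A B i f g h _ ih => exact ih.extension hI h (hD i)

theorem FilteredBy.reduction {ι κ : Type*} {D : ι → ModuleCat.{v} R} {E : κ → ModuleCat.{v} R}
    (hI : I * I = I) (hD : ∀ i, IsReductionAcyclic I (D i))
    (hE : ∀ i, Subsingleton (D i ⧸ I • (⊤ : Submodule R (D i))) ∨
      ∃ j, Nonempty ((D i ⧸ I • (⊤ : Submodule R (D i))) ≃ₗ[R] E j))
    (hA : FilteredBy D A) :
    FilteredBy E (ModuleCat.of R (A ⧸ I • (⊤ : Submodule R A))) := by
  induction hA with
  | of_subsingleton A h => exact .of_subsingleton _ (Submodule.mkQ_surjective _).subsingleton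
  | extension A B i f g h _ ih =>
    exact .extend (C := ModuleCat.of R (D i ⧸ I • (⊤ : Submodule R (D i))))
      (h.mapQ_smul_top ((hD i).comap_smul_top_eq hI h)) ih (hE i)

end

end Reduction

section Coreduction

universe v u

variable {R : Type u} [Ring R] {I : Ideal R} [I.IsTwoSided]

section

variable {A B C : Type*} [AddCommGroup A] [AddCommGroup B] [AddCommGroup C]
    [Module R A] [Module R B] [Module R C] {f : A →ₗ[R] B} {g : B →ₗ[R] C}

variable (I A) in
/-- The largest submodule of `A` annihilated by the two-sided ideal `I`. -/
def annihilatedBy : Submodule R A where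
  carrier := {x | ∀ a ∈ I, a • x = 0}
  add_mem' hx hy a ha := by rw [smul_add, hx a ha, hy a ha, add_zero]
  zero_mem' a _ := smul_zero a
  smul_mem' r x hx a ha := by rw [← mul_smul, hx _ (I.mul_mem_right r ha)]

theorem le_annihilator_annihilatedBy : I ≤ Module.annihilator R (annihilatedBy I A) :=
  fun a ha => Module.mem_annihilator.2 fun x => Subtype.ext (x.2 a ha)

theorem annihilatedBy_eq_top (hA : I ≤ Module.annihilator R A) : annihilatedBy I A = ⊤ :=
  eq_top_iff.2 fun x _ _ ha => Module.mem_annihilator.1 (hA ha) x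

theorem apply_mem_annihilatedBy (f : A →ₗ[R] B) {x : A} (hx : x ∈ annihilatedBy I A) :
    f x ∈ annihilatedBy I B := fun a ha => by
  rw [← map_smul, hx a ha, map_zero]

theorem range_le_annihilatedBy (hA : I ≤ Module.annihilator R A) (f : A →ₗ[R] B) :
    LinearMap.range f ≤ annihilatedBy I B := by
  rintro _ ⟨x, rfl⟩ a ha
  rw [← map_smul, Module.mem_annihilator.1 (hA ha), map_zero]

theorem mem_annihilatedBy_of_injective (hf : Function.Injective f) {x : A}
    (hx : f x ∈ annihilatedBy I B) : x ∈ annihilatedBy I A := fun a ha =>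
  hf (by rw [map_smul, hx a ha, map_zero])

variable (I) in
/-- The restriction of a linear map to the largest submodules annihilated by `I`. -/
def mapAnnihilatedBy (f : A →ₗ[R] B) : annihilatedBy I A →ₗ[R] annihilatedBy I B :=
  f.restrict fun _ => apply_mem_annihilatedBy f

theorem IsShortExact.mapAnnihilatedBy (h : IsShortExact f g)
    (hg : Function.Surjective (mapAnnihilatedBy I g)) :
    IsShortExact (mapAnnihilatedBy I f) (mapAnnihilatedBy I g) where
  injective _ _ hab := Subtype.ext (h.injective (congrArg Subtype.val hab))
  exact := by
    rintro ⟨b, hb⟩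
    constructor
    · intro hgb
      obtain ⟨a, rfl⟩ := (h.exact b).1 (congrArg Subtype.val hgb)
      exact ⟨⟨a, mem_annihilatedBy_of_injective h.injective hb⟩, rfl⟩
    · rintro ⟨a, ha⟩
      exact Subtype.ext ((h.exact b).2 ⟨a, congrArg Subtype.val ha⟩)
  surjective := hg

end

section

variable {κ ι : Type*} {T : κ → ModuleCat.{v} R}

variable (I T) in
/-- The modules `T k` are annihilated by `I` and generate every module annihilated by `I`. -/
structure IsTorsionGenerating : Prop where
  le_annihilator : ∀ k, I ≤ Module.annihilator R (T k)
  eq_top : ∀ M : ModuleCat.{v} R, I ≤ Module.annihilator R M → ∀ N : Submodule R M,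
    (∀ (k : κ) (φ : T k →ₗ[R] M), LinearMap.range φ ≤ N) → N = ⊤

variable [Small.{v} R] {A B C : ModuleCat.{v} R} {f : A →ₗ[R] B} {g : B →ₗ[R] C}

variable (T) in
/-- The higher extension groups from the modules `T k` to `Y` vanish. If the `T k` generate the
modules annihilated by `I`, such modules `Y` are acyclic for the functor `annihilatedBy I`. -/
def IsAcyclicFor (Y : ModuleCat.{v} R) : Prop :=
  ∀ k n, Subsingleton (Abelian.Ext (T k) Y (n + 1))

theorem IsAcyclicFor.of_subsingleton [Subsingleton A] : IsAcyclicFor T A := fun _ _ =>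
  subsingleton_ext_to_of_isZero (ModuleCat.isZero_of_subsingleton _)

theorem IsAcyclicFor.extension (h : IsShortExact f g) (hA : IsAcyclicFor T A)
    (hC : IsAcyclicFor T C) : IsAcyclicFor T B := fun k n =>
  subsingleton_ext_to_X₂ h.shortExact (hA k n) (hC k n)

theorem IsAcyclicFor.cokernel (h : IsShortExact f g) (hA : IsAcyclicFor T A)
    (hB : IsAcyclicFor T B) : IsAcyclicFor T C := fun k n =>
  subsingleton_ext_to_X₃ h.shortExact (hB k n) (hA k (n + 1))

theorem IsAcyclicFor.surjective_mapAnnihilatedBy (hT : IsTorsionGenerating I T)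
    (h : IsShortExact f g) (hA : IsAcyclicFor T A) :
    Function.Surjective (mapAnnihilatedBy I g) := by
  refine LinearMap.range_eq_top.1 (hT.eq_top (ModuleCat.of R (annihilatedBy I C))
    le_annihilator_annihilatedBy _ fun k φ => ?_)
  rintro _ ⟨t, rfl⟩
  obtain ⟨ψ, hψ⟩ := exists_lift_of_subsingleton_ext h.shortExact (hA k 0)
    (ModuleCat.ofHom ((annihilatedBy I C).subtype ∘ₗ φ))
  exact ⟨⟨ψ t, range_le_annihilatedBy (hT.le_annihilator k) ψ.hom ⟨t, rfl⟩⟩,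
    Subtype.ext (ConcreteCategory.congr_hom hψ t)⟩

theorem FilteredBy.isAcyclicFor {D : ι → ModuleCat.{v} R} (hD : ∀ i, IsAcyclicFor T (D i))
    (hA : FilteredBy D A) : IsAcyclicFor T A := by
  induction hA with
  | of_subsingleton A h => exact .of_subsingleton
  | extension A B i f g h _ ih => exact ih.extension h (hD i)

theorem FilteredBy.coreduction {κ' : Type*} {D : ι → ModuleCat.{v} R}
    {E : κ' → ModuleCat.{v} R} (hT : IsTorsionGenerating I T) (hD : ∀ i, IsAcyclicFor T (D i))
    (hE : ∀ i, Subsingleton (annihilatedBy I (D i)) ∨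
      ∃ j, Nonempty (annihilatedBy I (D i) ≃ₗ[R] E j))
    (hA : FilteredBy D A) : FilteredBy E (ModuleCat.of R (annihilatedBy I A)) := by
  induction hA with
  | of_subsingleton A h => exact .of_subsingleton _ (Subtype.val_injective.subsingleton)
  | extension A B i f g h hA ih =>
    exact .extend (C := ModuleCat.of R (annihilatedBy I (D i)))
      (h.mapAnnihilatedBy ((hA.isAcyclicFor hD).surjective_mapAnnihilatedBy hT h)) ih (hE i)

end

end Coreduction

section ExactSequences

open QHPaper

variable {R : Type} [Ring R] {n : ℕ} {N : Fin (n + 2) → ModuleCat.{0} R}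
  {f : ∀ i : Fin (n + 1), N i.castSucc →ₗ[R] N i.succ}

theorem isExactSeq_of_addEquiv {R' : Type} [Ring R'] {N' : Fin (n + 2) → ModuleCat.{0} R'}
    {f' : ∀ i : Fin (n + 1), N' i.castSucc →ₗ[R'] N' i.succ} (e : ∀ i, N i ≃+ N' i)
    (he : ∀ i x, e i.succ (f i x) = f' i (e i.castSucc x)) (h : IsExactSeq R n N f) :
    IsExactSeq R' n N' f' := by
  obtain ⟨hinj, hsurj, hexact⟩ := h
  refine ⟨fun x y hxy => ?_, fun y => ?_, fun i => ?_⟩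
  · obtain ⟨x, rfl⟩ := (e _).surjective x
    obtain ⟨y, rfl⟩ := (e _).surjective y
    rw [← he, ← he] at hxy
    rw [hinj ((e _).injective hxy)]
  · obtain ⟨y, rfl⟩ := (e _).surjective y
    obtain ⟨x, rfl⟩ := hsurj y
    exact ⟨e _ x, (he _ x).symm⟩
  · ext y
    obtain ⟨y, rfl⟩ := (e i.succ.castSucc).surjective y
    have hker : f' i.succ (e _ y) = 0 ↔ y ∈ LinearMap.ker (f i.succ) := by
      rw [← he, map_eq_zero_iff _ (e _).injective, LinearMap.mem_ker]
    rw [LinearMap.mem_ker, hker, ← hexact]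
    constructor
    · rintro ⟨x, hx⟩
      obtain ⟨x, rfl⟩ := (e _).surjective x
      exact ⟨x, (e _).injective ((he i.castSucc x).trans hx)⟩
    · rintro ⟨x, rfl⟩
      exact ⟨e _ x, (he i.castSucc x).symm⟩

section

variable {I : Ideal R}

theorem isReductionAcyclic_quotient_range (hI : I * I = I) (h : IsExactSeq R n N f)
    (hN : ∀ i, IsReductionAcyclic I (N i)) (i : Fin (n + 1)) :
    IsReductionAcyclic I (ModuleCat.of R (N i.succ ⧸ LinearMap.range (f i))) := by
  induction i using Fin.reverseInduction with
  | last =>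
    have : Subsingleton (N (Fin.last n).succ ⧸ LinearMap.range (f (Fin.last n))) :=
      Submodule.Quotient.subsingleton_iff.2 (LinearMap.range_eq_top.2 h.2.1)
    exact .of_subsingleton
  | cast i ih => exact .kernel hI (isShortExact_liftQ_mkQ (h.2.2 i)) (hN _) ih

theorem exists_mem_smul_top_apply_eq_of_isExactSeq (hI : I * I = I) (h : IsExactSeq R n N f)
    (hN : ∀ i, IsReductionAcyclic I (N i)) {i : Fin (n + 1)} {x : N i.castSucc}
    (hx : f i x ∈ I • (⊤ : Submodule R (N i.succ))) :
    ∃ y ∈ I • (⊤ : Submodule R (N i.castSucc)), f i y = f i x := by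
  have hpure := IsReductionAcyclic.comap_smul_top_eq (A := ModuleCat.of R (LinearMap.range (f i)))
    hI (isShortExact_subtype_mkQ (LinearMap.range (f i)))
    (isReductionAcyclic_quotient_range hI h hN i)
  have hx' : (f i).rangeRestrict x ∈ I • (⊤ : Submodule R (LinearMap.range (f i))) := by
    rwa [← hpure]
  obtain ⟨y, hy, hyx⟩ := exists_mem_smul_top_apply_eq (f i).surjective_rangeRestrict hx'
  exact ⟨y, hy, congrArg Subtype.val hyx⟩

theorem isExactSeq_reduction (hI : I * I = I) (h : IsExactSeq R n N f)
    (hN : ∀ i, IsReductionAcyclic I (N i)) :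
    IsExactSeq R n (fun i => ModuleCat.of R (N i ⧸ I • (⊤ : Submodule R (N i)))) fun i =>
      Submodule.mapQ (I • ⊤) (I • ⊤) (f i) (Submodule.smul_top_le_comap_smul_top I (f i)) := by
  have hpure := @exists_mem_smul_top_apply_eq_of_isExactSeq _ _ _ _ _ _ hI h hN
  refine ⟨?_, fun y => ?_, fun i => le_antisymm ?_ fun x hx => ?_⟩
  · refine (injective_iff_map_eq_zero _).2 fun x hx => ?_
    obtain ⟨x, rfl⟩ := Submodule.mkQ_surjective _ x
    obtain ⟨y, hy, hyx⟩ := hpure ((Submodule.Quotient.mk_eq_zero _).1 hx)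
    exact (Submodule.Quotient.mk_eq_zero _).2 (h.1 hyx ▸ hy)
  · obtain ⟨y, rfl⟩ := Submodule.mkQ_surjective _ y
    obtain ⟨x, rfl⟩ := h.2.1 y
    exact ⟨Submodule.mkQ _ x, rfl⟩
  · rintro _ ⟨x, rfl⟩
    obtain ⟨x, rfl⟩ := Submodule.mkQ_surjective _ x
    exact congrArg (Submodule.mkQ _) ((h.2.2 i).le ⟨x, rfl⟩)
  · obtain ⟨x, rfl⟩ := Submodule.mkQ_surjective (I • (⊤ : Submodule R (N i.succ.castSucc))) x
    obtain ⟨y, hy, hyx⟩ := hpure ((Submodule.Quotient.mk_eq_zero _).1 hx)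
    obtain ⟨z, hz⟩ := (h.2.2 i).ge (by rw [LinearMap.mem_ker, map_sub, hyx, sub_self] :
      x - y ∈ LinearMap.ker (f i.succ))
    refine ⟨Submodule.mkQ _ z, (Submodule.Quotient.eq _).2 ?_⟩
    rw [hz, sub_sub_cancel_left]
    exact neg_mem hy

end

section

variable {I : Ideal R} [I.IsTwoSided] {κ : Type*} {T : κ → ModuleCat.{0} R}

theorem isAcyclicFor_ker (h : IsExactSeq R n N f) (hN : ∀ i, IsAcyclicFor T (N i))
    (i : Fin (n + 1)) : IsAcyclicFor T (ModuleCat.of R (LinearMap.ker (f i))) := by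
  induction i using Fin.induction with
  | zero =>
    have := Submodule.subsingleton_iff_eq_bot.2 (LinearMap.ker_eq_bot.2 h.1)
    exact .of_subsingleton
  | succ i ih => exact .cokernel (isShortExact_subtype_codRestrict (h.2.2 i)) ih (hN _)

theorem isExactSeq_coreduction (hT : IsTorsionGenerating I T) (h : IsExactSeq R n N f)
    (hN : ∀ i, IsAcyclicFor T (N i)) :
    IsExactSeq R n (fun i => ModuleCat.of R (annihilatedBy I (N i))) fun i =>
      mapAnnihilatedBy I (f i) := by
  have hker := isAcyclicFor_ker h hN
  refine ⟨fun x y hxy => Subtype.ext (h.1 (congrArg Subtype.val hxy)),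
    (hker _).surjective_mapAnnihilatedBy hT (isShortExact_subtype_ker h.2.1),
    fun i => le_antisymm ?_ fun x hx => ?_⟩
  · rintro _ ⟨x, rfl⟩
    exact Subtype.ext ((h.2.2 i).le ⟨x.1, rfl⟩)
  · have hx' : x.1 ∈ LinearMap.ker (f i.succ) := congrArg Subtype.val hx
    obtain ⟨y, hy⟩ := (hker _).surjective_mapAnnihilatedBy hT
      (C := ModuleCat.of R (LinearMap.ker (f i.succ))) (isShortExact_subtype_codRestrict (h.2.2 i))
      ⟨⟨x.1, hx'⟩, fun a ha => Subtype.ext (x.2 a ha)⟩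
    exact ⟨y, Subtype.ext (congrArg (fun z => (z.1 : N i.succ.castSucc)) hy)⟩

end

end ExactSequences

section Weights

open QHPaper

variable {S Λ : Type} [Ring S] [Fintype Λ] [PartialOrder Λ] {Q : QHData S Λ} {μ ν γ : Λ}

theorem exists_isGreatest_of_isProjCover {P L : ModuleCat.{0} S} [IsSimpleModule S L]
    (h : IsProjCover S P L) :
    ∃ m : Submodule S P, IsGreatest {N | N ≠ ⊤} m ∧ Nonempty ((P ⧸ m) ≃ₗ[S] L) := by
  obtain ⟨-, π, hπ, hsmall⟩ := h
  have hker := LinearMap.isCoatom_ker_of_surjective hπ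
  refine ⟨_, ⟨hker.1, fun N hN => ?_⟩, ⟨π.quotKerEquivOfSurjective hπ⟩⟩
  by_contra hle
  exact hN (hsmall N (hker.2 _ (right_lt_sup.2 hle)))

theorem nonempty_linearEquiv_of_surjective {P L L' : ModuleCat.{0} S} [IsSimpleModule S L]
    [IsSimpleModule S L'] (h : IsProjCover S P L) {π : P →ₗ[S] L'}
    (hπ : Function.Surjective π) : Nonempty (L ≃ₗ[S] L') := by
  obtain ⟨m, hm, ⟨θ⟩⟩ := exists_isGreatest_of_isProjCover h
  have hker := LinearMap.isCoatom_ker_of_surjective hπ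
  have hm' : LinearMap.ker π = m := (hker.le_iff_eq hm.1).1 (hm.2 hker.1) |>.symm
  exact ⟨θ.symm.trans ((Submodule.quotEquivOfEq _ _ hm'.symm).trans
    (π.quotKerEquivOfSurjective hπ))⟩

theorem isCompFactor_of_hom_ne_zero {P L X : ModuleCat.{0} S} [IsSimpleModule S L]
    (h : IsProjCover S P L) {φ : P →ₗ[S] X} (hφ : φ ≠ 0) : IsCompFactor S L X := by
  obtain ⟨m, hm, ⟨θ⟩⟩ := exists_isGreatest_of_isProjCover h
  have hle : LinearMap.ker φ ≤ m := hm.2 (mt LinearMap.ker_eq_top.1 hφ)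
  let ρ : P →ₗ[S] subquot S (m.map φ) (LinearMap.range φ) := Submodule.mkQ _ ∘ₗ φ.rangeRestrict
  have hρ : LinearMap.ker ρ = m := by
    rw [LinearMap.ker_comp, Submodule.ker_mkQ]
    exact (Submodule.comap_map_eq φ m).trans (sup_eq_left.2 hle)
  exact ⟨m.map φ, LinearMap.range φ, LinearMap.map_le_range,
    ⟨(ρ.quotKerEquivOfSurjective ((Submodule.mkQ_surjective _).comp
      φ.surjective_rangeRestrict)).symm.trans ((Submodule.quotEquivOfEq _ _ hρ).trans θ)⟩⟩

theorem exists_hom_ne_zero_of_isCompFactor {P L X : ModuleCat.{0} S} [IsSimpleModule S L]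
    (h : IsProjCover S P L) (hX : IsCompFactor S L X) : ∃ φ : P →ₗ[S] X, φ ≠ 0 := by
  obtain ⟨hP, π, hπ, -⟩ := h
  obtain ⟨A, B, -, ⟨θ⟩⟩ := hX
  obtain ⟨ψ, hψ⟩ := Module.projective_lifting_property (Submodule.mkQ (A.comap B.subtype))
    (θ.symm.toLinearMap ∘ₗ π) (Submodule.mkQ_surjective _)
  refine ⟨B.subtype ∘ₗ ψ, fun h0 => ?_⟩
  have hψ0 : ψ = 0 := (LinearMap.cancel_left B.subtype_injective).1
    (h0.trans (LinearMap.comp_zero _).symm)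
  have := IsSimpleModule.nontrivial S L
  obtain ⟨l, hl⟩ := exists_ne (0 : L)
  obtain ⟨p, rfl⟩ := hπ l
  refine hl (θ.symm.injective ?_)
  rw [map_zero, ← LinearEquiv.coe_coe, ← LinearMap.comp_apply, ← hψ, hψ0, LinearMap.comp_zero,
    LinearMap.zero_apply]

theorem not_isCompFactor_iff {X : ModuleCat.{0} S} :
    ¬ IsCompFactor S (Q.L ν) X ↔ Subsingleton (Q.P ν →ₗ[S] X) := by
  have := Q.simpleL ν
  rw [not_iff_comm, not_subsingleton_iff_nontrivial]
  refine ⟨fun h => isCompFactor_of_hom_ne_zero (Q.projCover ν) (exists_ne _).choose_spec,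
    fun h => ?_⟩
  obtain ⟨φ, hφ⟩ := exists_hom_ne_zero_of_isCompFactor (Q.projCover ν) h
  exact ⟨φ, 0, hφ⟩

section

variable {P X Y Z : ModuleCat.{0} S}

theorem subsingleton_hom_of_injective {f : X →ₗ[S] Y} (hf : Function.Injective f)
    (h : Subsingleton (P →ₗ[S] Y)) : Subsingleton (P →ₗ[S] X) :=
  ⟨fun _ _ => (LinearMap.cancel_left hf).1 (h.elim _ _)⟩

theorem subsingleton_hom_of_surjective {f : X →ₗ[S] Y} (hf : Function.Surjective f)
    (h : Subsingleton (X →ₗ[S] P)) : Subsingleton (Y →ₗ[S] P) :=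
  ⟨fun _ _ => (LinearMap.cancel_right hf).1 (h.elim _ _)⟩

theorem subsingleton_hom_of_surjective_of_projective [Module.Projective S P] {f : X →ₗ[S] Y}
    (hf : Function.Surjective f) (h : Subsingleton (P →ₗ[S] X)) : Subsingleton (P →ₗ[S] Y) := by
  refine subsingleton_of_forall_eq 0 fun φ => ?_
  obtain ⟨ψ, rfl⟩ := Module.projective_lifting_property f φ hf
  rw [Subsingleton.elim ψ 0, LinearMap.comp_zero]

theorem exists_comp_eq_of_range_le {f : X →ₗ[S] Z} (hf : Function.Injective f) {φ : P →ₗ[S] Z}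
    (h : LinearMap.range φ ≤ LinearMap.range f) : ∃ ψ : P →ₗ[S] X, f ∘ₗ ψ = φ := by
  refine ⟨(LinearEquiv.ofInjective f hf).symm.toLinearMap ∘ₗ
    φ.codRestrict _ fun p => h ⟨p, rfl⟩, LinearMap.ext fun p => ?_⟩
  simp

theorem exists_lift_of_exact [Module.Projective S P] {f : X →ₗ[S] Y} {g : Y →ₗ[S] Z}
    (hfg : Function.Exact f g) {φ : P →ₗ[S] Y} (hφ : g ∘ₗ φ = 0) :
    ∃ ψ : P →ₗ[S] X, f ∘ₗ ψ = φ := by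
  have hrange (p : P) : φ p ∈ LinearMap.range f := (hfg _).1 (LinearMap.congr_fun hφ p)
  obtain ⟨ψ, hψ⟩ := Module.projective_lifting_property f.rangeRestrict
    (φ.codRestrict _ hrange) f.surjective_rangeRestrict
  exact ⟨ψ, LinearMap.ext fun p => congrArg Subtype.val (LinearMap.congr_fun hψ p)⟩

theorem subsingleton_hom_of_exact [Module.Projective S P] {f : X →ₗ[S] Y} {g : Y →ₗ[S] Z}
    (hfg : Function.Exact f g) (hX : Subsingleton (P →ₗ[S] X))
    (hZ : Subsingleton (P →ₗ[S] Z)) : Subsingleton (P →ₗ[S] Y) := by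
  refine subsingleton_of_forall_eq 0 fun φ => ?_
  obtain ⟨ψ, rfl⟩ := exists_lift_of_exact hfg (hZ.elim (g ∘ₗ φ) 0)
  rw [hX.elim ψ 0, LinearMap.comp_zero]

theorem subsingleton_ext_zero_of_subsingleton_hom (h : Subsingleton (X →ₗ[S] Y)) :
    Subsingleton (Abelian.Ext X Y 0) :=
  subsingleton_ext_zero_iff.2 (ModuleCat.homEquiv.subsingleton_congr.2 h)

theorem subsingleton_ext_succ_of_projective [Module.Projective S P] {n : ℕ} :
    Subsingleton (Abelian.Ext P Y (n + 1)) :=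
  have : Projective P := inferInstance
  subsingleton_of_forall_eq 0 Abelian.Ext.eq_zero_of_projective

theorem FilteredBy.subsingleton_ext {ι : Type*} {D : ι → ModuleCat.{0} S} {n : ℕ}
    (h : ∀ i, Subsingleton (Abelian.Ext (D i) Y n)) (hX : FilteredBy D X) :
    Subsingleton (Abelian.Ext X Y n) := by
  induction hX with
  | of_subsingleton X hX => exact subsingleton_ext_of_isZero (ModuleCat.isZero_of_subsingleton X)
  | extension A B i f g hfg _ ih => exact subsingleton_ext_X₂ hfg.shortExact ih (h i)

end

section

variable (Q)

instance (μ : Λ) : Module.Projective S (Q.P μ) := (Q.projCover μ).1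

instance (μ : Λ) : IsSimpleModule S (Q.L μ) := Q.simpleL μ

theorem exists_surjective_proj_simple (μ : Λ) :
    ∃ π : Q.P μ →ₗ[S] Q.L μ, Function.Surjective π :=
  (Q.projCover μ).2.imp fun _ h => h.1

theorem not_subsingleton_hom_proj_simple (μ : Λ) :
    ¬ Subsingleton (Q.P μ →ₗ[S] Q.L μ) := fun h => by
  obtain ⟨π, hπ⟩ := exists_surjective_proj_simple Q μ
  have := IsSimpleModule.nontrivial S (Q.L μ)
  obtain ⟨y, hy⟩ := exists_ne (0 : Q.L μ)
  obtain ⟨p, rfl⟩ := hπ y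
  exact hy (LinearMap.congr_fun (h.elim π 0) p)

theorem exists_surjective_proj_std (μ : Λ) :
    ∃ π : Q.P μ →ₗ[S] Q.std μ, Function.Surjective π := by
  obtain ⟨K, ⟨θ⟩, -⟩ := Q.stdSpec μ
  exact ⟨θ.symm.toLinearMap ∘ₗ K.mkQ, θ.symm.surjective.comp K.mkQ_surjective⟩

theorem exists_injective_costd_inj (μ : Λ) :
    ∃ j : Q.costd μ →ₗ[S] Q.I μ, Function.Injective j ∧ ∀ V : Submodule S (Q.I μ),
      (∀ ν, ¬ ν ≤ μ → Subsingleton (Q.P ν →ₗ[S] V)) → V ≤ LinearMap.range j := by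
  obtain ⟨V, ⟨θ⟩, -, hV⟩ := Q.costdSpec μ
  refine ⟨V.subtype ∘ₗ θ.toLinearMap, V.subtype_injective.comp θ.injective, fun V' hV' => ?_⟩
  rw [LinearMap.range_comp_of_range_eq_top _ θ.range, Submodule.range_subtype]
  exact hV V' fun ν => not_imp_not.1 fun hν => not_isCompFactor_iff.2 (hV' ν hν)

theorem isCompFactor_std (μ : Λ) : IsCompFactor S (Q.L μ) (Q.std μ) := by
  obtain ⟨n, F, hmono, -, -, -, hcard⟩ := Q.multOne μ
  obtain ⟨i, hi⟩ := (Nat.card_eq_one_iff_unique.1 hcard).2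
  exact ⟨F i.castSucc, F i.succ, hmono Fin.castSucc_lt_succ.le, hi⟩

theorem exists_surjective_std_simple (μ : Λ) :
    ∃ π : Q.std μ →ₗ[S] Q.L μ, Function.Surjective π := by
  obtain ⟨π, hπ⟩ := exists_surjective_proj_std Q μ
  obtain ⟨m, hm, ⟨θ⟩⟩ := exists_isGreatest_of_isProjCover (Q.projCover μ)
  have hle : LinearMap.ker π ≤ m := hm.2 fun htop =>
    have : Subsingleton (Q.std μ) := (π.quotKerEquivOfSurjective hπ).toEquiv.subsingleton_congr.1
      (Submodule.Quotient.subsingleton_iff.2 htop)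
    not_isCompFactor_iff.2 inferInstance (isCompFactor_std Q μ)
  exact ⟨θ.toLinearMap ∘ₗ Submodule.factor hle ∘ₗ (π.quotKerEquivOfSurjective hπ).symm.toLinearMap,
    θ.surjective.comp ((Submodule.factor_surjective hle).comp (LinearEquiv.surjective _))⟩

/- The top section of a standard filtration of `P μ` has head `L μ`, so it is `Δ μ`. -/
theorem exists_isShortExact_proj_std (μ : Λ) :
    ∃ (K : ModuleCat.{0} S) (f : K →ₗ[S] Q.P μ) (g : Q.P μ →ₗ[S] Q.std μ), IsShortExact f g ∧
      FilteredBy (fun ν : {ν // μ ≤ ν} => Q.std ν) K := by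
  obtain ⟨n, F, s, hF, hs, -⟩ := Q.projFilt μ
  have hP : FilteredBy (fun ν : {ν // μ ≤ ν} => Q.std ν) (Q.P μ) :=
    .of_hasFiltrationWithSections (s := fun i => ⟨s i, hs i⟩) hF
  cases hP with
  | of_subsingleton _ h =>
    exact (not_subsingleton_hom_proj_simple Q μ inferInstance).elim
  | extension K _ ν f g h hK =>
    obtain ⟨ν, hν⟩ := ν
    obtain ⟨π, hπ⟩ := exists_surjective_std_simple Q ν
    obtain ⟨e⟩ := nonempty_linearEquiv_of_surjective (Q.projCover μ) (π := π ∘ₗ g)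
      (hπ.comp h.surjective)
    obtain rfl : μ = ν := of_not_not fun hne => (Q.nonisoL μ ν hne).false e
    exact ⟨K, f, g, h, hK⟩

theorem filteredBy_std_proj (μ : Λ) : FilteredBy Q.std (Q.P μ) := by
  obtain ⟨n, F, s, hF, -⟩ := Q.projFilt μ
  exact .of_hasFiltrationWithSections hF

end

theorem subsingleton_hom_std (h : ¬ ν ≤ μ) : Subsingleton (Q.P ν →ₗ[S] Q.std μ) := by
  obtain ⟨K, ⟨θ⟩, hK, -⟩ := Q.stdSpec μ
  exact subsingleton_hom_of_injective (Y := ModuleCat.of S (Q.P μ ⧸ K)) θ.injective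
    (not_isCompFactor_iff.1 (mt (hK ν) h))

theorem subsingleton_hom_costd (h : ¬ ν ≤ μ) : Subsingleton (Q.P ν →ₗ[S] Q.costd μ) := by
  obtain ⟨V, ⟨θ⟩, hV, -⟩ := Q.costdSpec μ
  exact subsingleton_hom_of_injective (Y := ModuleCat.of S V) θ.injective
    (not_isCompFactor_iff.1 (mt (hV ν) h))

theorem subsingleton_hom_std_of_proj {X : ModuleCat.{0} S} (h : Subsingleton (Q.P μ →ₗ[S] X)) :
    Subsingleton (Q.std μ →ₗ[S] X) :=
  have ⟨_, hπ⟩ := exists_surjective_proj_std Q μ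
  subsingleton_hom_of_surjective hπ h

theorem subsingleton_ext_std_succ {Y : ModuleCat.{0} S} {n : ℕ}
    (h : ∀ ν, μ ≤ ν → Subsingleton (Abelian.Ext (Q.std ν) Y n)) :
    Subsingleton (Abelian.Ext (Q.std μ) Y (n + 1)) := by
  obtain ⟨K, f, g, hfg, hK⟩ := exists_isShortExact_proj_std Q μ
  exact subsingleton_ext_X₃ hfg.shortExact (hK.subsingleton_ext fun ⟨ν, hν⟩ => h ν hν)
    subsingleton_ext_succ_of_projective

theorem exists_extend_to_inj {A B : ModuleCat.{0} S} {f : A →ₗ[S] B}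
    (hf : Function.Injective f) (φ : A →ₗ[S] Q.I γ) : ∃ ψ : B →ₗ[S] Q.I γ, ψ ∘ₗ f = φ :=
  have := (Q.injHull γ).1
  (Module.Injective.out f hf φ).imp fun _ h => LinearMap.ext h

theorem exists_extend_to_costd (hγ : μ ≤ γ) {K : ModuleCat.{0} S} {f : K →ₗ[S] Q.P μ}
    {g : Q.P μ →ₗ[S] Q.std μ} (h : IsShortExact f g) (φ : K →ₗ[S] Q.costd γ) :
    ∃ ψ : Q.P μ →ₗ[S] Q.costd γ, ψ ∘ₗ f = φ := by
  obtain ⟨j, hj, hmax⟩ := exists_injective_costd_inj Q γ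
  obtain ⟨ψ, hψ⟩ := exists_extend_to_inj h.injective (j ∘ₗ φ)
  have hfactors (ν : Λ) (hν : ¬ ν ≤ γ) : Subsingleton (Q.P ν →ₗ[S] LinearMap.range ψ) := by
    refine subsingleton_of_forall_eq 0 fun χ => ?_
    obtain ⟨χ', rfl⟩ := Module.projective_lifting_property _ χ ψ.surjective_rangeRestrict
    obtain ⟨χ'', rfl⟩ := exists_lift_of_exact h.exact
      ((subsingleton_hom_std fun hle => hν (hle.trans hγ)).elim (g ∘ₗ χ') 0)
    have hφχ : φ ∘ₗ χ'' = 0 := (subsingleton_hom_costd hν).elim _ _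
    have hψχ : ψ ∘ₗ f ∘ₗ χ'' = 0 := by
      rw [← LinearMap.comp_assoc, hψ, LinearMap.comp_assoc, hφχ, LinearMap.comp_zero]
    exact LinearMap.ext fun x => Subtype.ext (LinearMap.congr_fun hψχ x)
  obtain ⟨ψ', rfl⟩ := exists_comp_eq_of_range_le hj (hmax _ hfactors)
  exact ⟨ψ', (LinearMap.cancel_left hj).1 hψ⟩

theorem subsingleton_ext_std_costd (n : ℕ) :
    Subsingleton (Abelian.Ext (Q.std μ) (Q.costd γ) (n + 1)) := by
  induction n generalizing μ with
  | zero =>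
    by_cases hγ : μ ≤ γ
    · obtain ⟨K, f, g, h, -⟩ := exists_isShortExact_proj_std Q μ
      refine subsingleton_ext_one_of_forall_extend h.shortExact
        subsingleton_ext_succ_of_projective fun φ => ?_
      obtain ⟨ψ, hψ⟩ := exists_extend_to_costd hγ h φ.hom
      exact ⟨ModuleCat.ofHom ψ, ModuleCat.hom_ext hψ⟩
    · exact subsingleton_ext_std_succ fun ν hν => subsingleton_ext_zero_of_subsingleton_hom
        (subsingleton_hom_std_of_proj (subsingleton_hom_costd fun hle => hγ (hν.trans hle)))
  | succ n ih => exact subsingleton_ext_std_succ fun _ _ => ih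

theorem subsingleton_of_forall_subsingleton_hom {M : ModuleCat.{0} S}
    (h : ∀ ν, Subsingleton (Q.P ν →ₗ[S] M)) : Subsingleton M := by
  refine subsingleton_of_forall_eq 0 fun x => ?_
  by_contra hx
  let N := Submodule.span S {x}
  have : Nontrivial N := Submodule.nontrivial_iff_ne_bot.2 (mt Submodule.span_singleton_eq_bot.1 hx)
  obtain ⟨m, hm⟩ := IsCoatomic.exists_coatom (Submodule S N)
  have hsimple : IsSimpleModule S (N ⧸ m) := isSimpleModule_iff_isCoatom.2 hm
  obtain ⟨ν, ⟨e⟩⟩ := Q.fullL (ModuleCat.of S (N ⧸ m)) hsimple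
  have hN := subsingleton_hom_of_injective (X := ModuleCat.of S N) N.subtype_injective (h ν)
  exact not_subsingleton_hom_proj_simple Q ν (subsingleton_hom_of_surjective_of_projective
    (f := e.toLinearMap ∘ₗ m.mkQ) (e.surjective.comp m.mkQ_surjective) hN)

/- A nonzero submodule of `I γ` contains the socle `L γ`. -/
theorem subsingleton_of_injective_inj {X : ModuleCat.{0} S} {j : X →ₗ[S] Q.I γ}
    (hj : Function.Injective j) (h : Subsingleton (Q.P γ →ₗ[S] X)) : Subsingleton X := by
  obtain ⟨-, ι, hι, hess⟩ := Q.injHull γ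
  have hcomap : (LinearMap.range j).comap ι = ⊥ := (eq_bot_or_eq_top _).resolve_right fun htop => by
    obtain ⟨κ, rfl⟩ := exists_comp_eq_of_range_le hj (LinearMap.range_le_iff_comap.2 htop)
    exact not_subsingleton_hom_proj_simple Q γ
      (subsingleton_hom_of_injective (Function.Injective.of_comp hι) h)
  have hrange : LinearMap.range j = ⊥ := hess _ (by
    rw [inf_comm, ← Submodule.map_comap_eq, hcomap, Submodule.map_bot])
  rw [LinearMap.range_eq_bot] at hrange
  exact ⟨fun x y => hj (by rw [hrange, LinearMap.zero_apply, LinearMap.zero_apply])⟩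

theorem subsingleton_of_injective_costd {X : ModuleCat.{0} S} {f : X →ₗ[S] Q.costd γ}
    (hf : Function.Injective f) (h : Subsingleton (Q.P γ →ₗ[S] X)) : Subsingleton X :=
  have ⟨j, hj, _⟩ := exists_injective_costd_inj Q γ
  subsingleton_of_injective_inj (j := j ∘ₗ f) (hj.comp hf) h

end Weights

section Truncation

open QHPaper

variable {S Λ : Type} [Ring S] [Fintype Λ] [PartialOrder Λ] {Q : QHData S Λ} {Pi : Finset Λ}
  {I : Ideal S} {γ : Λ}

variable (Q Pi I) in
/-- `I` is the ideal cutting `S` down to the set `Pi` of weights: the modules annihilated by `I`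
are those all of whose composition factors `L γ` have `γ ∈ Pi`. -/
def IsTruncationIdeal : Prop :=
  ∀ M : ModuleCat.{0} S,
    I ≤ Module.annihilator S M ↔ ∀ γ ∉ Pi, ¬ IsCompFactor S (Q.L γ) M

namespace IsTruncationIdeal

theorem le_annihilator_iff (hI : IsTruncationIdeal Q Pi I) {M : ModuleCat.{0} S} :
    I ≤ Module.annihilator S M ↔ ∀ γ ∉ Pi, Subsingleton (Q.P γ →ₗ[S] M) :=
  (hI M).trans (forall₂_congr fun _ _ => not_isCompFactor_iff)

/- The modules belonging to `Pi` are closed under extensions, so `S ⧸ I * I` is one of them. -/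
theorem mul_self [I.IsTwoSided] (hI : IsTruncationIdeal Q Pi I) : I * I = I := by
  refine le_antisymm Ideal.mul_le_left fun a ha => ?_
  let M := ModuleCat.of S (S ⧸ (I * I) • (⊤ : Ideal S))
  let N : Submodule S M := I • ⊤
  have hN : I ≤ Module.annihilator S N :=
    le_annihilator_smul_top le_annihilator_quotient_smul_top
  have hM : I ≤ Module.annihilator S M := hI.le_annihilator_iff.2 fun γ hγ =>
    subsingleton_hom_of_exact (X := ModuleCat.of S N) (Z := ModuleCat.of S (M ⧸ N))
      (isShortExact_subtype_mkQ N).exact (hI.le_annihilator_iff.1 hN γ hγ)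
      (hI.le_annihilator_iff.1 le_annihilator_quotient_smul_top γ hγ)
  have ha0 : ((I * I) • (⊤ : Ideal S)).mkQ (a • 1) = 0 :=
    (map_smul _ a 1).trans (Module.mem_annihilator.1 (hM ha) _)
  simpa using (Submodule.Quotient.mk_eq_zero _).1 ha0

variable (hI : IsTruncationIdeal Q Pi I)
include hI

theorem isLeftOrthogonal_std (hsat : IsLowerSet (Pi : Set Λ)) (hγ : γ ∉ Pi) :
    IsLeftOrthogonal I (Q.std γ) := by
  intro T hT n
  induction n generalizing γ with
  | zero =>
    exact subsingleton_ext_zero_of_subsingleton_hom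
      (subsingleton_hom_std_of_proj (hI.le_annihilator_iff.1 hT γ hγ))
  | succ n ih => exact subsingleton_ext_std_succ fun ν hν => ih fun h => hγ (hsat hν h)

theorem le_annihilator_std (hsat : IsLowerSet (Pi : Set Λ)) (hγ : γ ∈ Pi) :
    I ≤ Module.annihilator S (Q.std γ) :=
  hI.le_annihilator_iff.2 fun _ hν => subsingleton_hom_std fun hle => hν (hsat hle hγ)

theorem le_annihilator_costd (hsat : IsLowerSet (Pi : Set Λ)) (hγ : γ ∈ Pi) :
    I ≤ Module.annihilator S (Q.costd γ) :=
  hI.le_annihilator_iff.2 fun _ hν => subsingleton_hom_costd fun hle => hν (hsat hle hγ)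

theorem isReductionAcyclic_std (hsat : IsLowerSet (Pi : Set Λ)) (γ : Λ) :
    IsReductionAcyclic I (Q.std γ) := by
  by_cases hγ : γ ∈ Pi
  · exact .of_le_annihilator (hI.le_annihilator_std hsat hγ)
  · exact .of_isLeftOrthogonal (hI.isLeftOrthogonal_std hsat hγ)

theorem reduction_std (hsat : IsLowerSet (Pi : Set Λ)) (γ : Λ) :
    Subsingleton (Q.std γ ⧸ I • (⊤ : Submodule S (Q.std γ))) ∨
      ∃ ν : {ν // ν ∈ Pi},
        Nonempty ((Q.std γ ⧸ I • (⊤ : Submodule S (Q.std γ))) ≃ₗ[S] Q.std ν) := by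
  by_cases hγ : γ ∈ Pi
  · exact .inr ⟨⟨γ, hγ⟩, ⟨Submodule.quotEquivOfEqBot _
      (smul_top_eq_bot (hI.le_annihilator_std hsat hγ))⟩⟩
  · exact .inl (Submodule.Quotient.subsingleton_iff.2
      (hI.isLeftOrthogonal_std hsat hγ).smul_top_eq_top)

theorem coreduction_costd [I.IsTwoSided] (hsat : IsLowerSet (Pi : Set Λ)) (γ : Λ) :
    Subsingleton (annihilatedBy I (Q.costd γ)) ∨
      ∃ ν : {ν // ν ∈ Pi}, Nonempty (annihilatedBy I (Q.costd γ) ≃ₗ[S] Q.costd ν) := by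
  by_cases hγ : γ ∈ Pi
  · exact .inr ⟨⟨γ, hγ⟩, ⟨LinearEquiv.ofTop _
      (annihilatedBy_eq_top (hI.le_annihilator_costd hsat hγ))⟩⟩
  · exact .inl (subsingleton_of_injective_costd
      (X := ModuleCat.of S (annihilatedBy I (Q.costd γ))) (Submodule.subtype_injective _)
      (hI.le_annihilator_iff.1 le_annihilator_annihilatedBy γ hγ))

end IsTruncationIdeal

section

variable (Q I) in
/-- The largest quotient of `P ν` annihilated by `I`; these are projective generators for the
modules annihilated by `I`. -/
abbrev truncatedProj (ν : Λ) : ModuleCat.{0} S :=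
  ModuleCat.of S (Q.P ν ⧸ I • (⊤ : Submodule S (Q.P ν)))

theorem isTorsionGenerating_truncatedProj : IsTorsionGenerating I (truncatedProj Q I) where
  le_annihilator _ := le_annihilator_quotient_smul_top
  eq_top M hM N hN := by
    refine Submodule.Quotient.subsingleton_iff.1 (subsingleton_of_forall_subsingleton_hom (Q := Q)
      (M := ModuleCat.of S (M ⧸ N)) fun ν => subsingleton_of_forall_eq 0 fun φ => ?_)
    obtain ⟨ψ, rfl⟩ := Module.projective_lifting_property N.mkQ φ N.mkQ_surjective
    let ψ' : truncatedProj Q I ν →ₗ[S] M := Submodule.liftQ _ ψ (smul_top_le_ker hM ψ)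
    exact LinearMap.ext fun p =>
      (Submodule.Quotient.mk_eq_zero N).2 (hN ν ψ' ⟨Submodule.mkQ _ p, rfl⟩)

namespace IsTruncationIdeal

variable [I.IsTwoSided] (hI : IsTruncationIdeal Q Pi I)
include hI

theorem isAcyclicFor_of_le_annihilator (hsat : IsLowerSet (Pi : Set Λ)) {M : ModuleCat.{0} S}
    (hM : I ≤ Module.annihilator S M) : IsAcyclicFor (truncatedProj Q I) M := fun ν n =>
  have hP : IsReductionAcyclic I (Q.P ν) :=
    (filteredBy_std_proj Q ν).isReductionAcyclic hI.mul_self (hI.isReductionAcyclic_std hsat)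
  subsingleton_ext_X₃ (isShortExact_subtype_mkQ _).shortExact (hP M hM n)
    subsingleton_ext_succ_of_projective

theorem isAcyclicFor_costd (hsat : IsLowerSet (Pi : Set Λ)) (γ : Λ) :
    IsAcyclicFor (truncatedProj Q I) (Q.costd γ) := fun ν n =>
  ((filteredBy_std_proj Q ν).reduction hI.mul_self (hI.isReductionAcyclic_std hsat)
    (hI.reduction_std hsat)).subsingleton_ext fun _ => subsingleton_ext_std_costd n

end IsTruncationIdeal

end

end Truncation

section Transfer

open QHPaper

universe v

variable {S : Type*} {SP : Type*} [Ring S] [Ring SP] {q : S →+* SP} {A B : ModuleCat.{v} SP}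

variable (q) in
/-- An `SP`-module, viewed as an `S`-module along `q : S →+* SP`. -/
noncomputable abbrev res (A : ModuleCat.{v} SP) : ModuleCat.{v} S :=
  (ModuleCat.restrictScalars q).obj A

variable (q) in
/-- An `SP`-linear map, viewed as an `S`-linear map. -/
noncomputable abbrev resMap (f : A →ₗ[SP] B) : res q A →ₗ[S] res q B :=
  ((ModuleCat.restrictScalars q).map (ModuleCat.ofHom f)).hom

/-- As `q` is surjective, an `S`-linear map between `SP`-modules is `SP`-linear. -/
noncomputable def ofResMap (hq : Function.Surjective q) (f : res q A →ₗ[S] res q B) :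
    A →ₗ[SP] B where
  toFun x := f x
  map_add' x y := f.map_add x y
  map_smul' a x := by
    obtain ⟨s, rfl⟩ := hq a
    exact f.map_smul s x

theorem IsShortExact.ofResMap {A B C : ModuleCat.{v} SP} (hq : Function.Surjective q)
    {f : res q A →ₗ[S] res q B} {g : res q B →ₗ[S] res q C} (h : IsShortExact f g) :
    IsShortExact (QHTruncation.ofResMap hq f) (QHTruncation.ofResMap hq g) :=
  ⟨h.injective, h.exact, h.surjective⟩

theorem ker_le_annihilator_res : RingHom.ker q ≤ Module.annihilator S (res q A) := fun _ hs =>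
  Module.mem_annihilator.2 fun x =>
    (congrArg (· • (show A from x)) hs).trans (zero_smul SP _)

theorem exists_res_linearEquiv (hq : Function.Surjective q) {X : ModuleCat.{v} S}
    (hX : RingHom.ker q ≤ Module.annihilator S X) :
    ∃ Y : ModuleCat.{v} SP, Nonempty (res q Y ≃ₗ[S] X) := by
  have hle : RingHom.ker q ≤ RingHom.ker (Module.toAddMonoidEnd S X) := fun s hs =>
    AddMonoidHom.ext (Module.mem_annihilator.1 (hX hs))
  let φ : SP →+* AddMonoid.End X := q.liftOfSurjective hq ⟨Module.toAddMonoidEnd S X, hle⟩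
  have hφ (s : S) : φ (q s) = Module.toAddMonoidEnd S X s :=
    RingHom.liftOfRightInverse_comp_apply _ _ _ _ s
  let _ : Module SP X := Module.compHom X φ
  exact ⟨ModuleCat.of SP X, ⟨{ AddEquiv.refl X with
    map_smul' := fun s x => congrArg (fun ψ : AddMonoid.End X => ψ x) (hφ s) }⟩⟩

theorem FilteredBy.restrictScalars {ι κ : Type*} {E : κ → ModuleCat.{v} SP}
    {D : ι → ModuleCat.{v} S}
    (hE : ∀ j, ∃ i, Nonempty (res q (E j) ≃ₗ[S] D i)) (hA : FilteredBy E A) :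
    FilteredBy D (res q A) := by
  induction hA with
  | of_subsingleton A h => exact .of_subsingleton _ h
  | extension A B j f g h _ ih =>
    exact ih.extend (C := res q (E j)) (f := resMap q f) (g := resMap q g)
      ⟨h.injective, h.exact, h.surjective⟩ (.inr (hE j))

theorem FilteredBy.of_restrictScalars {ι κ : Type*} {D : ι → ModuleCat.{v} S}
    {E : κ → ModuleCat.{v} SP}
    (hq : Function.Surjective q) (hD : ∀ i, ∃ j, Nonempty (res q (E j) ≃ₗ[S] D i))
    {X : ModuleCat.{v} S} (hX : FilteredBy D X) (e : res q A ≃ₗ[S] X) :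
    FilteredBy E A := by
  induction hX generalizing A with
  | of_subsingleton X h => exact .of_subsingleton _ e.toEquiv.subsingleton
  | extension X' X i f g h _ ih =>
    have hf : Function.Injective (e.symm.toLinearMap ∘ₗ f) := e.symm.injective.comp h.injective
    obtain ⟨A', ⟨e'⟩⟩ := exists_res_linearEquiv hq
      (ker_le_annihilator_res.trans (LinearMap.annihilator_le_of_injective _ hf))
    obtain ⟨j, ⟨ej⟩⟩ := hD i
    have h' := ((h.linearEquiv_middle e.symm).linearEquiv_right ej.symm).linearEquiv_left e'
    exact .extension A' A j _ _ (h'.ofResMap hq) (ih e')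

end Transfer

section Dimensions

open QHPaper

variable {S SP : Type} [Ring S] [Ring SP] {q : S →+* SP} {n : ℕ}

theorem isExactSeq_res {N : Fin (n + 2) → ModuleCat.{0} SP}
    {f : ∀ i : Fin (n + 1), N i.castSucc →ₗ[SP] N i.succ} (h : IsExactSeq SP n N f) :
    IsExactSeq S n (fun i => res q (N i)) fun i => resMap q (f i) :=
  isExactSeq_of_addEquiv (fun i => AddEquiv.refl (N i)) (fun _ _ => rfl) h

theorem exists_isExactSeq_of_ker_le_annihilator (hq : Function.Surjective q)
    {N : Fin (n + 2) → ModuleCat.{0} S} {f : ∀ i : Fin (n + 1), N i.castSucc →ₗ[S] N i.succ}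
    (h : IsExactSeq S n N f) (hN : ∀ i, RingHom.ker q ≤ Module.annihilator S (N i))
    (j : Fin (n + 2)) {M : ModuleCat.{0} SP} (e : res q M ≃ₗ[S] N j) :
    ∃ (N' : Fin (n + 2) → ModuleCat.{0} SP)
      (f' : ∀ i : Fin (n + 1), N' i.castSucc →ₗ[SP] N' i.succ),
      IsExactSeq SP n N' f' ∧ N' j = M ∧ ∀ i, Nonempty (res q (N' i) ≃ₗ[S] N i) := by
  have hlift (i : Fin (n + 2)) : ∃ X, Nonempty (res q X ≃ₗ[S] N i) ∧ (i = j → X = M) := by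
    by_cases hij : i = j
    · subst hij
      exact ⟨M, ⟨e⟩, fun _ => rfl⟩
    · obtain ⟨X, eX⟩ := exists_res_linearEquiv hq (hN i)
      exact ⟨X, eX, fun h => (hij h).elim⟩
  choose N' hN' hM using hlift
  have eN (i : Fin (n + 2)) : res q (N' i) ≃ₗ[S] N i := (hN' i).some
  refine ⟨N', fun i => ofResMap hq ((eN i.succ).symm.toLinearMap ∘ₗ f i ∘ₗ
    (eN i.castSucc).toLinearMap), ?_, hM j rfl, hN'⟩
  exact isExactSeq_of_addEquiv (fun i => (eN i).symm.toAddEquiv)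
    (fun i x => congrArg (fun y => (eN i.succ).symm (f i y))
      ((eN i.castSucc).apply_symm_apply x).symm) h

variable {Λ : Type} [Fintype Λ] [PartialOrder Λ] {Q : QHData S Λ} {Pi : Finset Λ}
  {QP : QHData SP {x : Λ // x ∈ Pi}} {M : ModuleCat.{0} SP}

theorem inStdFilt_iff_filteredBy {X : ModuleCat.{0} S} : InStdFilt S Q X ↔ FilteredBy Q.std X :=
  filteredBy_iff_exists_hasFiltrationWithSections.symm

theorem inCostdFilt_iff_filteredBy {X : ModuleCat.{0} S} :
    InCostdFilt S Q X ↔ FilteredBy Q.costd X :=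
  filteredBy_iff_exists_hasFiltrationWithSections.symm

theorem wfdLE_restrictScalars (hstd : ∀ γ, Nonempty (res q (QP.std γ) ≃ₗ[S] Q.std γ.val))
    (h : WfdLE SP QP M n) : WfdLE S Q (res q M) n := by
  obtain ⟨N, f, hN, hM, hF⟩ := h
  exact ⟨_, _, isExactSeq_res hN, congrArg (res q) hM, fun i =>
    inStdFilt_iff_filteredBy.2 <| (inStdFilt_iff_filteredBy.1 (hF i)).restrictScalars
      fun γ => ⟨γ.val, hstd γ⟩⟩

theorem gfdLE_restrictScalars (hcostd : ∀ γ, Nonempty (res q (QP.costd γ) ≃ₗ[S] Q.costd γ.val))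
    (h : GfdLE SP QP M n) : GfdLE S Q (res q M) n := by
  obtain ⟨N, f, hN, hM, hF⟩ := h
  exact ⟨_, _, isExactSeq_res hN, congrArg (res q) hM, fun i =>
    inCostdFilt_iff_filteredBy.2 <| (inCostdFilt_iff_filteredBy.1 (hF i)).restrictScalars
      fun γ => ⟨γ.val, hcostd γ⟩⟩

variable (hq : Function.Surjective q) (hI : IsTruncationIdeal Q Pi (RingHom.ker q))
  (hsat : IsLowerSet (Pi : Set Λ))
include hq hI hsat

theorem wfdLE_of_restrictScalars (hstd : ∀ γ, Nonempty (res q (QP.std γ) ≃ₗ[S] Q.std γ.val))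
    (h : WfdLE S Q (res q M) n) : WfdLE SP QP M n := by
  obtain ⟨N, f, hN, hM, hF⟩ := h
  have hF' (i) := inStdFilt_iff_filteredBy.1 (hF i)
  have hlast : RingHom.ker q ≤ Module.annihilator S (N (Fin.last (n + 1))) := by
    rw [hM]
    exact ker_le_annihilator_res
  have eM : res q M ≃ₗ[S] N (Fin.last (n + 1)) := (eqToIso hM.symm).toLinearEquiv
  have hacyclic (i) : IsReductionAcyclic (RingHom.ker q) (N i) := by
    induction i using Fin.lastCases with
    | last => exact .of_le_annihilator hlast
    | cast i => exact (hF' i).isReductionAcyclic hI.mul_self (hI.isReductionAcyclic_std hsat)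
  obtain ⟨N', f', hN', hM', e⟩ := exists_isExactSeq_of_ker_le_annihilator hq
    (isExactSeq_reduction hI.mul_self hN hacyclic) (fun _ => le_annihilator_quotient_smul_top)
    (Fin.last (n + 1)) (M := M)
    (eM.trans (Submodule.quotEquivOfEqBot _ (smul_top_eq_bot hlast)).symm)
  refine ⟨N', f', hN', hM', fun i => inStdFilt_iff_filteredBy.2 ?_⟩
  exact ((hF' i).reduction hI.mul_self (hI.isReductionAcyclic_std hsat)
    (hI.reduction_std hsat)).of_restrictScalars hq (fun γ => ⟨γ, hstd γ⟩) (e i.castSucc).some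

theorem gfdLE_of_restrictScalars
    (hcostd : ∀ γ, Nonempty (res q (QP.costd γ) ≃ₗ[S] Q.costd γ.val))
    (h : GfdLE S Q (res q M) n) : GfdLE SP QP M n := by
  obtain ⟨N, f, hN, hM, hF⟩ := h
  have hF' (i) := inCostdFilt_iff_filteredBy.1 (hF i)
  have hzero : RingHom.ker q ≤ Module.annihilator S (N 0) := by
    rw [hM]
    exact ker_le_annihilator_res
  have eM : res q M ≃ₗ[S] N 0 := (eqToIso hM.symm).toLinearEquiv
  have hacyclic (i) : IsAcyclicFor (truncatedProj Q (RingHom.ker q)) (N i) := by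
    induction i using Fin.cases with
    | zero => exact hI.isAcyclicFor_of_le_annihilator hsat hzero
    | succ i => exact (hF' i).isAcyclicFor (hI.isAcyclicFor_costd hsat)
  obtain ⟨N', f', hN', hM', e⟩ := exists_isExactSeq_of_ker_le_annihilator hq
    (isExactSeq_coreduction isTorsionGenerating_truncatedProj hN hacyclic)
    (fun _ => le_annihilator_annihilatedBy) 0 (M := M)
    (eM.trans (LinearEquiv.ofTop _ (annihilatedBy_eq_top hzero)).symm)
  refine ⟨N', f', hN', hM', fun i => inCostdFilt_iff_filteredBy.2 ?_⟩
  exact ((hF' i).coreduction isTorsionGenerating_truncatedProj (hI.isAcyclicFor_costd hsat)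
    (hI.coreduction_costd hsat)).of_restrictScalars hq (fun γ => ⟨γ, hcostd γ⟩) (e i.succ).some

end Dimensions

section Idempotents

open QHPaper

variable {S : Type*} [Ring S]

theorem subsingleton_hom_iff_of_isIdempotentElem {P M : Type*} [AddCommGroup P] [Module S P]
    [AddCommGroup M] [Module S M] {e : S} (he : IsIdempotentElem e)
    (hP : Nonempty (Submodule.span S {e} ≃ₗ[S] P)) :
    Subsingleton (P →ₗ[S] M) ↔ ∀ m : M, e • m = 0 := by
  obtain ⟨θ⟩ := hP
  have hmem : e ∈ Submodule.span S {e} := Submodule.mem_span_singleton_self e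
  constructor
  · intro _ m
    have h := congrArg (fun φ : P →ₗ[S] M => φ (θ ⟨e, hmem⟩)) (Subsingleton.elim
      ((LinearMap.toSpanSingleton S M m ∘ₗ (Submodule.span S {e}).subtype) ∘ₗ θ.symm.toLinearMap) 0)
    simpa using h
  · intro h
    refine subsingleton_of_forall_eq 0 fun φ => LinearMap.ext fun p => ?_
    obtain ⟨⟨_, hx⟩, rfl⟩ := θ.surjective p
    obtain ⟨s, rfl⟩ := Submodule.mem_span_singleton.1 hx
    have hse : (⟨s • e, hx⟩ : Submodule.span S {e}) = s • e • ⟨e, hmem⟩ :=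
      Subtype.ext (by simp [he.eq])
    rw [hse, map_smul, map_smul, map_smul, map_smul, h, smul_zero, LinearMap.zero_apply]

theorem span_range_mul_le_annihilator_iff {M : Type*} [AddCommGroup M] [Module S M] {ε : S} :
    Submodule.span S (Set.range fun t => ε * t) ≤ Module.annihilator S M ↔
      ∀ m : M, ε • m = 0 := by
  refine ⟨fun h m => ?_, fun h => Submodule.span_le.2 ?_⟩
  · exact Module.mem_annihilator.1 (h (Submodule.subset_span ⟨1, mul_one ε⟩)) m
  · rintro _ ⟨t, rfl⟩
    exact Module.mem_annihilator.2 fun m => by rw [mul_smul, h]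

theorem sum_smul_eq_zero_iff_of_orthogonal {ι M : Type*} [AddCommGroup M] [Module S M]
    {e : ι → S} (he : OrthogonalIdempotents e) {s : Finset ι} :
    (∀ m : M, (∑ i ∈ s, e i) • m = 0) ↔ ∀ i ∈ s, ∀ m : M, e i • m = 0 := by
  classical
  refine ⟨fun h i hi m => ?_, fun h m => ?_⟩
  · rw [← he.mul_sum_of_mem hi, mul_smul, h, smul_zero]
  · rw [Finset.sum_smul, Finset.sum_eq_zero fun i hi => h i hi m]

theorem isTruncationIdeal_span_range_sum_mul {S Λ : Type} [Ring S] [Fintype Λ] [PartialOrder Λ]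
    [DecidableEq Λ] {Q : QHData S Λ} {e : Λ → S} (he : OrthogonalIdempotents e)
    (hproj : ∀ γ, Nonempty (Submodule.span S {e γ} ≃ₗ[S] Q.P γ)) (Pi : Finset Λ) :
    IsTruncationIdeal Q Pi
      (Submodule.span S (Set.range fun t => (∑ γ ∈ Piᶜ, e γ) * t)) := fun M => by
  rw [span_range_mul_le_annihilator_iff, sum_smul_eq_zero_iff_of_orthogonal he]
  simp only [Finset.mem_compl, not_isCompFactor_iff,
    subsingleton_hom_iff_of_isIdempotentElem (he.idem _) (hproj _)]

end Idempotents

end QHTruncation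

open QHPaper QHTruncation in
theorem stmt12_general {S SP Λ : Type} [Ring S] [Ring SP] [Fintype Λ] [PartialOrder Λ]
    (QH : QHData S Λ) (Pi : Finset Λ) (hsat : IsLowerSet (Pi : Set Λ)) (q : S →+* SP)
    (hq : Function.Surjective q) (hker : IsTruncationIdeal QH Pi (RingHom.ker q))
    (QP : QHData SP {x : Λ // x ∈ Pi})
    (hstd : ∀ γ, Nonempty ((ModuleCat.restrictScalars q).obj (QP.std γ) ≃ₗ[S] QH.std γ.val))
    (hcostd : ∀ γ,
      Nonempty ((ModuleCat.restrictScalars q).obj (QP.costd γ) ≃ₗ[S] QH.costd γ.val))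
    (M : ModuleCat.{0} SP) :
    gfd SP QP M = gfd S QH ((ModuleCat.restrictScalars q).obj M) ∧
    wfd SP QP M = wfd S QH ((ModuleCat.restrictScalars q).obj M) :=
  ⟨congrArg sInf (Set.ext fun _ =>
    ⟨gfdLE_restrictScalars hcostd, gfdLE_of_restrictScalars hq hker hsat hcostd⟩),
  congrArg sInf (Set.ext fun _ =>
    ⟨wfdLE_restrictScalars hstd, wfdLE_of_restrictScalars hq hker hsat hstd⟩)⟩

open QHPaper in
/-- Let `S` be a quasi-hereditary algebra, `Π ⊆ Λ⁺` a saturated subset, and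
`S(Π) = S/Se_ΓS` the corresponding quasi-hereditary quotient (where `Γ = Λ⁺ \ Π`), a
quasi-hereditary algebra for the poset `Π` with the same standard and costandard modules.
For every finite-dimensional `S(Π)`-module `M`, the ∇-filtration dimension of `M` as an
`S(Π)`-module equals the ∇-filtration dimension of `M` as an `S`-module, and likewise for
the Δ-filtration dimension. -/
theorem stmt12 (k S Λ : Type) [Field k] [Ring S] [Algebra k S] [FiniteDimensional k S]
    [Fintype Λ] [PartialOrder Λ] [DecidableEq Λ]
    (QH : QHData S Λ) (Pi : Finset Λ)
    (hsat : ∀ lam ∈ Pi, ∀ mu : Λ, mu < lam → mu ∈ Pi)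
    (e : Λ → S)
    (hprim : ∀ lam, IsPrimitiveIdempotent S (e lam))
    (horth : ∀ lam mu : Λ, lam ≠ mu → e lam * e mu = 0)
    (hsum : (∑ lam, e lam) = 1)
    (hproj : ∀ lam, Nonempty (↥(Submodule.span S {e lam}) ≃ₗ[S] ↥(QH.P lam)))
    -- the quotient algebra `SP = S/Se_ΓS`:
    (SP : Type) [Ring SP] (q : S →+* SP) (hq : Function.Surjective q)
    (hker : ∀ x : S, q x = 0 ↔
      x ∈ Submodule.span S (Set.range (fun t : S => (∑ lam ∈ Piᶜ, e lam) * t)))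
    -- the quasi-hereditary structure on `SP`, with the same standards and costandards:
    (QP : QHData SP {x : Λ // x ∈ Pi})
    (hL : ∀ pp : {x : Λ // x ∈ Pi},
      Nonempty (↥((ModuleCat.restrictScalars q).obj (QP.L pp)) ≃ₗ[S] ↥(QH.L pp.val)))
    (hstd : ∀ pp : {x : Λ // x ∈ Pi},
      Nonempty (↥((ModuleCat.restrictScalars q).obj (QP.std pp)) ≃ₗ[S] ↥(QH.std pp.val)))
    (hcostd : ∀ pp : {x : Λ // x ∈ Pi},
      Nonempty (↥((ModuleCat.restrictScalars q).obj (QP.costd pp)) ≃ₗ[S] ↥(QH.costd pp.val)))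
    (M : ModuleCat.{0} SP) (hMfin : Module.Finite SP ↥M) :
    gfd SP QP M = gfd S QH ((ModuleCat.restrictScalars q).obj M) ∧
    wfd SP QP M = wfd S QH ((ModuleCat.restrictScalars q).obj M) := by
  have he : OrthogonalIdempotents e := ⟨fun γ => (hprim γ).1, fun γ ν h => horth γ ν h⟩
  exact stmt12_general QH Pi (fun a b hba ha => hba.eq_or_lt.elim (· ▸ ha) (hsat a ha b)) q hq
    ((Submodule.ext hker : RingHom.ker q = _) ▸
      QHTruncation.isTruncationIdeal_span_range_sum_mul he hproj Pi) QP hstd hcostd M
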